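/- Let N ≥ 2 and let p satisfy 2 < p < 2N/(N−2) if N ≥ 3, and 2 < p < ∞ if N = 2. Let f : [0,∞) → ℝ be continuously differentiable and nondecreasing with f(0) = 0 and f'(0) = 0, and suppose there exist C > 0 with |f(s)| ≤ C·s^{p−1} for all s ≥ 0, and R₀ > 0, μ > 2 with f(s)·s ≥ μ·F(s) for all s ≥ R₀, where F(s) = ∫₀^s f(t) dt. Suppose λ₂ > 1 is a real number such that there exists a nonzero function v : [0,1] → ℝ, continuously differentiable on [0,1] and twice differentiable on (0,1), with v'(0) = v'(1) = 0 and −v''(r) − ((N−1)/r)·v'(r) + v(r) = λ₂·v(r) on (0,1), and no such nonzero function exists for any λ ∈ (1, λ₂); and suppose there exists u₀ > 0 with f(u₀) = u₀ and f'(u₀) > λ₂. Then there exist two functions u₁, u₂ : [0,1] → ℝ, each continuously differentiable on [0,1], twice differentiable on (0,1), with u_i'(0) = u_i'(1) = 0, u_i(r) > 0 for all r, u_i nonconstant, solving −u_i''(r) − ((N−1)/r)·u_i'(r) + u_i(r) = f(u_i(r)) on (0,1), such that u₁ is nondecreasing and u₂ is nonincreasing. -/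

import Mathlib

open Set

/-- `lam` is a radial Neumann eigenvalue of `-Δ + 1` on the unit ball of `ℝ^N`:
there is a nonzero radial eigenfunction `v` with `v'(0) = v'(1) = 0` solving
`-v'' - ((N-1)/r) v' + v = lam v` on `(0,1)`. -/
def IsRadialEigenvalue (N : ℕ) (lam : ℝ) : Prop :=
  ∃ v v' v'' : ℝ → ℝ,
    (∀ r ∈ Set.Icc (0:ℝ) 1, HasDerivWithinAt v (v' r) (Set.Icc 0 1) r) ∧
    ContinuousOn v' (Set.Icc 0 1) ∧
    (∀ r ∈ Set.Ioo (0:ℝ) 1, HasDerivAt v' (v'' r) r) ∧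
    v' 0 = 0 ∧ v' 1 = 0 ∧
    (∃ r ∈ Set.Icc (0:ℝ) 1, v r ≠ 0) ∧
    ∀ r ∈ Set.Ioo (0:ℝ) 1,
      -v'' r - ((N : ℝ) - 1) / r * v' r + v r = lam * v r

section

open Filter Topology

/-- Integral over `[0,1]` against the radial weight `r ^ n`. -/
noncomputable def radialInt (n : ℕ) (g : ℝ → ℝ) : ℝ := ∫ r in (0:ℝ)..1, r ^ n * g r

/-- `v` is the continuous derivative of `u` on `[0,1]`. -/
structure IsC1On (u v : ℝ → ℝ) : Prop where
  cont : ContinuousOn v (Icc 0 1)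
  deriv : ∀ r ∈ Icc (0:ℝ) 1, HasDerivWithinAt u (v r) (Icc 0 1) r

/-- `u`, with derivative `v`, solves `-u'' - (n / r) u' + u = h` on `(0,1)` with Neumann
boundary conditions; the equation is written in divergence form. -/
structure IsNeumannSol (n : ℕ) (h u v : ℝ → ℝ) : Prop extends IsC1On u v where
  source : ContinuousOn h (Icc 0 1)
  flux : ∀ r ∈ Ioo (0:ℝ) 1, HasDerivAt (fun x => x ^ n * v x) (r ^ n * (u r - h r)) r
  left : v 0 = 0
  right : v 1 = 0

namespace IsC1On

variable {u v z w : ℝ → ℝ}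

lemma continuousOn (h : IsC1On u v) : ContinuousOn u (Icc 0 1) :=
  fun r hr => (h.deriv r hr).continuousWithinAt

lemma hasDerivAt (h : IsC1On u v) {r : ℝ} (hr : r ∈ Ioo (0:ℝ) 1) : HasDerivAt u (v r) r :=
  (h.deriv r (Ioo_subset_Icc_self hr)).hasDerivAt (Icc_mem_nhds hr.1 hr.2)

lemma sub (h : IsC1On u v) (k : IsC1On z w) :
    IsC1On (fun r => u r - z r) (fun r => v r - w r) :=
  ⟨h.cont.sub k.cont, fun r hr => (h.deriv r hr).sub (k.deriv r hr)⟩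

lemma const (c : ℝ) : IsC1On (fun _ => c) (fun _ => 0) :=
  ⟨continuousOn_const, fun r _ => hasDerivWithinAt_const r _ c⟩

end IsC1On

section radialInt

variable {n : ℕ} {g k : ℝ → ℝ}

lemma radialInt_intervalIntegrable (hg : ContinuousOn g (Icc 0 1)) :
    IntervalIntegrable (fun r => r ^ n * g r) MeasureTheory.volume 0 1 := by
  apply ContinuousOn.intervalIntegrable
  rw [uIcc_of_le zero_le_one]
  fun_prop

lemma radialInt_add (hg : ContinuousOn g (Icc 0 1)) (hk : ContinuousOn k (Icc 0 1)) :
    radialInt n (fun r => g r + k r) = radialInt n g + radialInt n k := by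
  unfold radialInt
  rw [← intervalIntegral.integral_add (radialInt_intervalIntegrable hg)
    (radialInt_intervalIntegrable hk)]
  simp only [mul_add]

lemma radialInt_sub (hg : ContinuousOn g (Icc 0 1)) (hk : ContinuousOn k (Icc 0 1)) :
    radialInt n (fun r => g r - k r) = radialInt n g - radialInt n k := by
  unfold radialInt
  rw [← intervalIntegral.integral_sub (radialInt_intervalIntegrable hg)
    (radialInt_intervalIntegrable hk)]
  simp only [mul_sub]

lemma radialInt_const_mul (c : ℝ) (g : ℝ → ℝ) :
    radialInt n (fun r => c * g r) = c * radialInt n g := by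
  unfold radialInt
  rw [← intervalIntegral.integral_const_mul]
  congr 1; ext r; ring

lemma radialInt_const (c : ℝ) : radialInt n (fun _ => c) = c / (n + 1) := by
  unfold radialInt
  rw [intervalIntegral.integral_mul_const, integral_pow]
  simp; ring

lemma radialInt_mono (hg : ContinuousOn g (Icc 0 1)) (hk : ContinuousOn k (Icc 0 1))
    (h : ∀ r ∈ Icc (0:ℝ) 1, g r ≤ k r) : radialInt n g ≤ radialInt n k :=
  intervalIntegral.integral_mono_on zero_le_one (radialInt_intervalIntegrable hg)
    (radialInt_intervalIntegrable hk)
    fun r hr => mul_le_mul_of_nonneg_left (h r hr) (pow_nonneg hr.1 n)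

lemma radialInt_congr (h : ∀ r ∈ Icc (0:ℝ) 1, g r = k r) : radialInt n g = radialInt n k := by
  unfold radialInt
  apply intervalIntegral.integral_congr
  intro r hr
  rw [uIcc_of_le zero_le_one] at hr
  simp only [h r hr]

lemma radialInt_nonneg (h : ∀ r ∈ Icc (0:ℝ) 1, 0 ≤ g r) : 0 ≤ radialInt n g :=
  intervalIntegral.integral_nonneg zero_le_one
    fun r hr => mul_nonneg (pow_nonneg hr.1 n) (h r hr)

lemma eq_zero_of_radialInt_le_zero (hg : ContinuousOn g (Icc 0 1))
    (h : ∀ r ∈ Icc (0:ℝ) 1, 0 ≤ g r) (h0 : radialInt n g ≤ 0) :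
    ∀ r ∈ Icc (0:ℝ) 1, g r = 0 := by
  have key : ∀ r ∈ Ioo (0:ℝ) 1, g r = 0 := by
    by_contra! hne
    obtain ⟨r, hr, hr0⟩ := hne
    have hpos : 0 < radialInt n g := by
      apply intervalIntegral.integral_pos zero_lt_one (by fun_prop)
      · intro x hx
        exact mul_nonneg (pow_nonneg hx.1.le n) (h x (Ioc_subset_Icc_self hx))
      · have hr' := Ioo_subset_Icc_self hr
        exact ⟨r, hr', mul_pos (pow_pos hr.1 n) (lt_of_le_of_ne (h r hr') (Ne.symm hr0))⟩
    linarith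
  have hsub : Icc (0:ℝ) 1 ⊆ closure (Ioo 0 1) := by rw [closure_Ioo zero_ne_one]
  intro r hr
  exact (EqOn.of_subset_closure (s := Ioo (0:ℝ) 1) (t := Icc 0 1) (f := g) (g := fun _ => 0)
    key hg continuousOn_const Ioo_subset_Icc_self hsub) hr

end radialInt

namespace IsNeumannSol

variable {n : ℕ} {h k u v z w : ℝ → ℝ}

lemma flux_continuousOn (hs : IsNeumannSol n h u v) :
    ContinuousOn (fun x => x ^ n * v x) (Icc 0 1) :=
  (continuousOn_id.pow n).mul hs.cont

lemma sub (hs : IsNeumannSol n h u v) (ks : IsNeumannSol n k z w) :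
    IsNeumannSol n (fun r => h r - k r) (fun r => u r - z r) (fun r => v r - w r) where
  toIsC1On := hs.toIsC1On.sub ks.toIsC1On
  source := hs.source.sub ks.source
  flux r hr := by
    have := (hs.flux r hr).sub (ks.flux r hr)
    refine (this.congr_deriv (by ring)).congr_of_eventuallyEq (.of_forall fun x => ?_)
    simp only [Pi.sub_apply]; ring
  left := by simp [hs.left, ks.left]
  right := by simp [hs.right, ks.right]

lemma const (n : ℕ) (c : ℝ) : IsNeumannSol n (fun _ => c) (fun _ => c) (fun _ => 0) where
  toIsC1On := IsC1On.const c
  source := continuousOn_const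
  flux r _ := by simpa using hasDerivAt_const r (0:ℝ)
  left := rfl
  right := rfl

lemma neg (hs : IsNeumannSol n h u v) :
    IsNeumannSol n (fun r => -h r) (fun r => -u r) (fun r => -v r) := by
  simpa using (const n 0).sub hs

/-- The weak form of the Neumann problem. -/
lemma green (hs : IsNeumannSol n h u v) (hz : IsC1On z w) :
    radialInt n (fun r => v r * w r + u r * z r) = radialInt n (fun r => h r * z r) := by
  have hu := hs.continuousOn
  have hv := hs.cont
  have hh := hs.source
  have hzc := hz.continuousOn
  have hw := hz.cont
  have key : ∫ r in (0:ℝ)..1, (r ^ n * (u r - h r)) * z r + (r ^ n * v r) * w r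
      = (1 ^ n * v 1) * z 1 - (0 ^ n * v 0) * z 0 := by
    apply intervalIntegral.integral_eq_sub_of_hasDerivAt_of_le zero_le_one
      (f := fun r => (r ^ n * v r) * z r)
    · fun_prop
    · intro r hr
      exact (hs.flux r hr).mul (hz.hasDerivAt hr)
    · apply ContinuousOn.intervalIntegrable
      rw [uIcc_of_le zero_le_one]
      fun_prop
  rw [hs.left, hs.right] at key
  have e : ∀ r, (r ^ n * (u r - h r)) * z r + (r ^ n * v r) * w r =
      r ^ n * ((v r * w r + u r * z r) - h r * z r) := fun r => by ring
  simp only [e, mul_zero, zero_mul, sub_zero] at key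
  have := radialInt_sub (n := n) (g := fun r => v r * w r + u r * z r) (k := fun r => h r * z r)
    (by fun_prop) (by fun_prop)
  rw [radialInt, key] at this
  linarith

lemma hasDerivAt_min_sq (x : ℝ) : HasDerivAt (fun y : ℝ => (min y 0) ^ 2) (2 * min x 0) x := by
  rcases lt_trichotomy x 0 with hx | rfl | hx
  · have := (hasDerivAt_id x).pow 2
    refine (this.congr_of_eventuallyEq ?_).congr_deriv (by simp [min_eq_left hx.le])
    filter_upwards [Iio_mem_nhds hx] with y hy
    simp [min_eq_left (mem_Iio.1 hy).le]
  · rw [hasDerivAt_iff_isLittleO_nhds_zero]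
    simp only [zero_add, min_self, mul_zero, smul_zero, sub_zero, ne_eq, OfNat.ofNat_ne_zero,
      not_false_eq_true, zero_pow]
    have h2 : (fun h : ℝ => h ^ 2) =o[nhds 0] fun h => h := by
      simpa using Asymptotics.isLittleO_pow_id (𝕜 := ℝ) (n := 2) (by norm_num)
    refine Asymptotics.IsBigO.trans_isLittleO ?_ h2
    refine Asymptotics.IsBigO.of_bound 1 (.of_forall fun y => ?_)
    rcases le_total y 0 with hy | hy
    · simp [min_eq_left hy]
    · simp only [min_eq_right hy]; norm_num; positivity
  · refine ((hasDerivAt_const x (0:ℝ)).congr_of_eventuallyEq ?_).congr_deriv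
      (by simp [min_eq_right hx.le])
    filter_upwards [Ioi_mem_nhds hx] with y hy
    simp [min_eq_right (mem_Ioi.1 hy).le]

/-- Weak maximum principle. -/
lemma nonneg (hs : IsNeumannSol n h u v) (hh : ∀ r ∈ Icc (0:ℝ) 1, 0 ≤ h r) :
    ∀ r ∈ Icc (0:ℝ) 1, 0 ≤ u r := by
  have hu := hs.continuousOn
  have hv := hs.cont
  have hz : IsC1On (fun r => (min (u r) 0) ^ 2) (fun r => 2 * min (u r) 0 * v r) :=
    ⟨by fun_prop, fun r hr =>
      (hasDerivAt_min_sq (u r)).comp_hasDerivWithinAt r (hs.deriv r hr)⟩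
  have g := hs.green hz
  have h1 : 0 ≤ radialInt n (fun r => h r * (min (u r) 0) ^ 2) :=
    radialInt_nonneg fun r hr => mul_nonneg (hh r hr) (sq_nonneg _)
  have hs0 : ∀ r, min (u r) 0 * v r ^ 2 ≤ 0 := fun r =>
    mul_nonpos_of_nonpos_of_nonneg (min_le_right _ _) (sq_nonneg _)
  have hm : ∀ r, 0 ≤ -(u r * min (u r) 0 ^ 2) := fun r => by
    rcases le_total (u r) 0 with hr | hr
    · rw [min_eq_left hr]; nlinarith [mul_nonneg (neg_nonneg.2 hr) (sq_nonneg (u r))]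
    · simp [min_eq_right hr]
  have h2 : radialInt n (fun r => -(u r * min (u r) 0 ^ 2)) ≤ 0 := by
    have : radialInt n (fun r => -(u r * min (u r) 0 ^ 2)) ≤
        radialInt n (fun r => (-1) * (v r * (2 * min (u r) 0 * v r) + u r * min (u r) 0 ^ 2)) :=
      radialInt_mono (by fun_prop) (by fun_prop) fun r _ => by nlinarith [hs0 r]
    rw [radialInt_const_mul, g] at this
    linarith
  intro r hr
  have := eq_zero_of_radialInt_le_zero (by fun_prop) (fun r _ => hm r) h2 r hr
  by_contra! hneg
  rw [min_eq_left hneg.le] at this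
  nlinarith [mul_pos (neg_pos.2 hneg) (pow_pos (neg_pos.2 hneg) 2)]

lemma le_of_source_le (hs : IsNeumannSol n h u v) (ks : IsNeumannSol n k z w)
    (hk : ∀ r ∈ Icc (0:ℝ) 1, h r ≤ k r) : ∀ r ∈ Icc (0:ℝ) 1, u r ≤ z r := fun r hr =>
  sub_nonneg.1 ((ks.sub hs).nonneg (fun r hr => sub_nonneg.2 (hk r hr)) r hr)

lemma antitoneOn (hs : IsNeumannSol n h u v) (hh : AntitoneOn h (Icc 0 1)) :
    AntitoneOn u (Icc 0 1) := by
  have hq := hs.flux_continuousOn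
  set q := fun x => x ^ n * v x with hqdef
  have hq0 : q 0 = 0 := by simp [hqdef, hs.left]
  have hq1 : q 1 = 0 := by simp [hqdef, hs.right]
  have hle : ∀ r ∈ Icc (0:ℝ) 1, q r ≤ 0 := by
    obtain ⟨a, ha, hmax⟩ := isCompact_Icc.exists_isMaxOn (nonempty_Icc.2 zero_le_one) hq
    by_contra! hex
    obtain ⟨b, hb, hbpos⟩ := hex
    have hapos : 0 < q a := hbpos.trans_le (hmax hb)
    have ha' : a ∈ Ioo (0:ℝ) 1 := by
      refine ⟨lt_of_le_of_ne ha.1 ?_, lt_of_le_of_ne ha.2 ?_⟩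
      · rintro rfl; linarith
      · rintro rfl; linarith
    have hcrit : a ^ n * (u a - h a) = 0 :=
      (hmax.isLocalMax (Icc_mem_nhds ha'.1 ha'.2)).hasDerivAt_eq_zero (hs.flux a ha')
    have hua : u a - h a = 0 := by
      rcases mul_eq_zero.1 hcrit with h | h
      · exact absurd h (pow_pos ha'.1 n).ne'
      · exact h
    -- the first zero of the flux beyond `a`
    let Z := Icc a 1 ∩ q ⁻¹' {0}
    have hZc : IsClosed Z :=
      (hq.mono (Icc_subset_Icc_left ha.1)).preimage_isClosed_of_isClosed isClosed_Icc
        isClosed_singleton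
    have hZne : Z.Nonempty := ⟨1, ⟨ha.2, le_rfl⟩, hq1⟩
    have hZb : BddBelow Z := ⟨a, fun x hx => hx.1.1⟩
    obtain ⟨⟨hab, hb1⟩, hqb⟩ := hZc.csInf_mem hZne hZb
    set β := sInf Z
    have hqpos : ∀ x ∈ Ico a β, 0 < q x := by
      intro x hx
      by_contra! hx0
      have hxc : ContinuousOn q (Icc a x) :=
        hq.mono (Icc_subset_Icc ha.1 (hx.2.le.trans hb1))
      obtain ⟨y, hy, hy0⟩ := intermediate_value_Icc' hx.1 hxc ⟨hx0, hapos.le⟩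
      have : β ≤ y := csInf_le hZb ⟨⟨hy.1, hy.2.trans (hx.2.le.trans hb1)⟩, hy0⟩
      linarith [hy.2, hx.2]
    have hsub : Icc a β ⊆ Icc 0 1 := Icc_subset_Icc ha.1 hb1
    have humono : MonotoneOn u (Icc a β) := by
      apply monotoneOn_of_deriv_nonneg (convex_Icc _ _) (hs.continuousOn.mono hsub)
      · intro x hx
        rw [interior_Icc] at hx
        exact (hs.hasDerivAt ⟨ha'.1.trans hx.1, hx.2.trans_le hb1⟩).differentiableAt.differentiableWithinAt
      · intro x hx
        rw [interior_Icc] at hx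
        rw [(hs.hasDerivAt ⟨ha'.1.trans hx.1, hx.2.trans_le hb1⟩).deriv]
        have := hqpos x ⟨hx.1.le, hx.2⟩
        exact (pos_of_mul_pos_right this (pow_pos (ha'.1.trans hx.1) n).le).le
    have hqmono : MonotoneOn q (Icc a β) := by
      apply monotoneOn_of_deriv_nonneg (convex_Icc _ _) (hq.mono hsub)
      · intro x hx
        rw [interior_Icc] at hx
        exact (hs.flux x ⟨ha'.1.trans hx.1, hx.2.trans_le hb1⟩).differentiableAt.differentiableWithinAt
      · intro x hx
        rw [interior_Icc] at hx
        rw [(hs.flux x ⟨ha'.1.trans hx.1, hx.2.trans_le hb1⟩).deriv]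
        have hx' : x ∈ Icc a β := Ioo_subset_Icc_self hx
        have h1 := humono ⟨le_rfl, hab⟩ hx' hx'.1
        have h2 := hh ha (hsub hx') hx'.1
        exact mul_nonneg (pow_pos (ha'.1.trans hx.1) n).le (by linarith)
    have := hqmono ⟨le_rfl, hab⟩ ⟨hab, le_rfl⟩ hab
    rw [hqb] at this
    linarith
  apply antitoneOn_of_deriv_nonpos (convex_Icc _ _) hs.continuousOn
  · intro x hx
    rw [interior_Icc] at hx
    exact (hs.hasDerivAt hx).differentiableAt.differentiableWithinAt
  · intro x hx
    rw [interior_Icc] at hx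
    rw [(hs.hasDerivAt hx).deriv]
    exact nonpos_of_mul_nonpos_right (hle x (Ioo_subset_Icc_self hx)) (pow_pos hx.1 n)

lemma monotoneOn (hs : IsNeumannSol n h u v) (hh : MonotoneOn h (Icc 0 1)) :
    MonotoneOn u (Icc 0 1) := by
  have := hs.neg.antitoneOn hh.neg
  intro x hx y hy hxy
  exact neg_le_neg_iff.1 (this hx hy hxy)

end IsNeumannSol

section Existence

/-- The radial primitive `r ^ (-n) ∫₀^r s ^ n x(s) ds`, written without the singularity at `0`. -/
noncomputable def radialPrimitive (n : ℕ) (x : ℝ → ℝ) (r : ℝ) : ℝ :=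
  r * ∫ θ in (0:ℝ)..1, θ ^ n * x (r * θ)

variable {n : ℕ} {x y : ℝ → ℝ}

lemma continuous_radialPrimitive (hx : Continuous x) : Continuous (radialPrimitive n x) := by
  unfold radialPrimitive
  refine continuous_id.mul ?_
  apply intervalIntegral.continuous_parametric_intervalIntegral_of_continuous'
  simp only [Function.uncurry_def]
  fun_prop

lemma pow_mul_radialPrimitive (r : ℝ) :
    r ^ n * radialPrimitive n x r = ∫ s in (0:ℝ)..r, s ^ n * x s := by
  unfold radialPrimitive
  have := intervalIntegral.smul_integral_comp_mul_left (a := 0) (b := 1)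
    (fun s => s ^ n * x s) r
  simp only [mul_zero, mul_one, smul_eq_mul] at this
  rw [← this, mul_left_comm, ← intervalIntegral.integral_const_mul]
  congr 2; ext θ; ring

lemma hasDerivAt_pow_mul_radialPrimitive (hx : Continuous x) (r : ℝ) :
    HasDerivAt (fun r => r ^ n * radialPrimitive n x r) (r ^ n * x r) r := by
  simp_rw [pow_mul_radialPrimitive]
  have hc : Continuous fun s => s ^ n * x s := by fun_prop
  exact intervalIntegral.integral_hasDerivAt_right (hc.intervalIntegrable _ _)
    (hc.stronglyMeasurableAtFilter _ _) hc.continuousAt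

lemma radialPrimitive_sub (hx : Continuous x) (hy : Continuous y) (r : ℝ) :
    radialPrimitive n (fun s => x s - y s) r = radialPrimitive n x r - radialPrimitive n y r := by
  unfold radialPrimitive
  rw [← mul_sub, ← intervalIntegral.integral_sub]
  · simp only [mul_sub]
  · exact Continuous.intervalIntegrable (by fun_prop) _ _
  · exact Continuous.intervalIntegrable (by fun_prop) _ _

lemma abs_radialPrimitive_le {M : ℝ} (hM : ∀ s, |x s| ≤ M) {r : ℝ} (hr : 0 ≤ r) :
    |radialPrimitive n x r| ≤ r * (M / (n + 1)) := by
  unfold radialPrimitive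
  rw [abs_mul, abs_of_nonneg hr]
  refine mul_le_mul_of_nonneg_left ?_ hr
  have h1 : ‖∫ θ in (0:ℝ)..1, θ ^ n * x (r * θ)‖ ≤ ∫ θ in (0:ℝ)..1, θ ^ n * M := by
    apply intervalIntegral.norm_integral_le_of_norm_le zero_le_one
    · refine .of_forall fun θ hθ => ?_
      rw [norm_mul, norm_pow, Real.norm_of_nonneg hθ.1.le]
      exact mul_le_mul_of_nonneg_left (hM _) (pow_nonneg hθ.1.le n)
    · exact Continuous.intervalIntegrable (by fun_prop) _ _
  rw [intervalIntegral.integral_mul_const, integral_pow] at h1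
  simp only [Real.norm_eq_abs, one_pow, ne_eq, Nat.add_eq_zero_iff, one_ne_zero, and_false,
    not_false_eq_true, zero_pow, sub_zero] at h1
  calc _ ≤ _ := h1
    _ = M / (n + 1) := by ring

/-- The extension of a continuous function on `[0,1]` by constants. -/
noncomputable abbrev ext01 (u : C(Icc (0:ℝ) 1, ℝ)) : ℝ → ℝ := IccExtend zero_le_one u

lemma continuous_ext01 (u : C(Icc (0:ℝ) 1, ℝ)) : Continuous (ext01 u) :=
  u.continuous.Icc_extend'

lemma ext01_of_mem (u : C(Icc (0:ℝ) 1, ℝ)) {r : ℝ} (hr : r ∈ Icc (0:ℝ) 1) :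
    ext01 u r = u ⟨r, hr⟩ := IccExtend_of_mem _ _ hr

lemma ext01_coe (u : C(Icc (0:ℝ) 1, ℝ)) (r : Icc (0:ℝ) 1) :
    ext01 u r = u r := ext01_of_mem u r.2

/-- Solvability of the radial Neumann problem. -/
lemma exists_isNeumannSol (hn : n ≠ 0) (h : C(Icc (0:ℝ) 1, ℝ)) :
    ∃ (u : C(Icc (0:ℝ) 1, ℝ)) (v : ℝ → ℝ), IsNeumannSol n (ext01 h) (ext01 u) v := by
  let D : C(Icc (0:ℝ) 1, ℝ) → ℝ → ℝ := fun u => radialPrimitive n fun s => ext01 u s - ext01 h s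
  have hsrc : ∀ u, Continuous fun s => ext01 u s - ext01 h s := fun u =>
    (continuous_ext01 u).sub (continuous_ext01 h)
  have hD : ∀ u, Continuous (D u) := fun u => continuous_radialPrimitive (hsrc u)
  let V : C(Icc (0:ℝ) 1, ℝ) → ℝ → ℝ := fun u r => ∫ s in (0:ℝ)..r, D u s
  have hVd : ∀ u r, HasDerivAt (V u) (D u r) r := fun u r =>
    intervalIntegral.integral_hasDerivAt_right ((hD u).intervalIntegrable _ _)
      ((hD u).stronglyMeasurableAtFilter _ _) (hD u).continuousAt
  have hV : ∀ u, Continuous (V u) := fun u =>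
    continuous_iff_continuousAt.2 fun r => (hVd u r).continuousAt
  let c : C(Icc (0:ℝ) 1, ℝ) → ℝ := fun u =>
    (n + 1) * (radialInt n (ext01 h) - radialInt n (V u))
  let Φ : C(Icc (0:ℝ) 1, ℝ) → C(Icc (0:ℝ) 1, ℝ) := fun u =>
    ⟨fun r => V u r + c u, by have := hV u; fun_prop⟩
  have hVdiff : ∀ u w, ∀ r ∈ Icc (0:ℝ) 1, |V u r - V w r| ≤ dist u w / 4 := by
    intro u w r hr
    have hDd : ∀ s ∈ Icc (0:ℝ) 1, |D u s - D w s| ≤ s * (dist u w / 2) := by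
      intro s hs
      rw [← radialPrimitive_sub (hsrc u) (hsrc w)]
      refine (abs_radialPrimitive_le (M := dist u w) (fun t => ?_) hs.1).trans ?_
      · have : ext01 u t - ext01 h t - (ext01 w t - ext01 h t) = ext01 u t - ext01 w t := by ring
        rw [this, ← Real.dist_eq]
        exact ContinuousMap.dist_apply_le_dist _
      · refine mul_le_mul_of_nonneg_left ?_ hs.1
        have : (1:ℝ) ≤ n := by exact_mod_cast Nat.one_le_iff_ne_zero.2 hn
        exact div_le_div_of_nonneg_left dist_nonneg two_pos (by linarith)
    have h1 : ‖∫ s in (0:ℝ)..r, (D u s - D w s)‖ ≤ ∫ s in (0:ℝ)..r, s * (dist u w / 2) := by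
      apply intervalIntegral.norm_integral_le_of_norm_le hr.1
      · exact .of_forall fun s hs => hDd s ⟨hs.1.le, hs.2.trans hr.2⟩
      · exact Continuous.intervalIntegrable (by fun_prop) _ _
    rw [intervalIntegral.integral_sub ((hD u).intervalIntegrable _ _)
      ((hD w).intervalIntegrable _ _), intervalIntegral.integral_mul_const, integral_id] at h1
    calc |V u r - V w r| ≤ _ := h1
      _ ≤ dist u w / 4 := by
        have : r ^ 2 ≤ 1 := pow_le_one₀ hr.1 hr.2
        nlinarith [dist_nonneg (x := u) (y := w)]
  have hcdiff : ∀ u w, |c u - c w| ≤ dist u w / 4 := by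
    intro u w
    have hu := (hV u).continuousOn (s := Icc 0 1)
    have hw := (hV w).continuousOn (s := Icc 0 1)
    have hpos : (0:ℝ) < n + 1 := by positivity
    have e : c u - c w = (n + 1) * (radialInt n fun r => V w r - V u r) := by
      rw [radialInt_sub hw hu]; simp only [c]; ring
    have b1 : (radialInt n fun r => V w r - V u r) ≤ dist u w / 4 / (n + 1) := by
      rw [← radialInt_const]
      refine radialInt_mono (hw.sub hu) continuousOn_const fun r hr => ?_
      have := (abs_le.1 (hVdiff u w r hr)).1
      linarith
    have b2 : -(dist u w / 4) / (n + 1) ≤ (radialInt n fun r => V w r - V u r) := by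
      rw [← radialInt_const]
      refine radialInt_mono continuousOn_const (hw.sub hu) fun r hr => ?_
      have := (abs_le.1 (hVdiff u w r hr)).2
      linarith
    rw [e, abs_le]
    rw [le_div_iff₀ hpos] at b1
    rw [div_le_iff₀ hpos] at b2
    constructor <;> linarith
  have hΦ : ContractingWith (1 / 2) Φ := by
    refine ⟨by norm_num [← NNReal.coe_lt_coe], LipschitzWith.of_dist_le_mul fun u w => ?_⟩
    rw [ContinuousMap.dist_le (by positivity)]
    intro r
    have h1 := hVdiff u w r r.2
    have h2 := hcdiff u w
    have : Φ u r - Φ w r = (V u r - V w r) + (c u - c w) := by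
      simp only [Φ, ContinuousMap.coe_mk]; ring
    rw [Real.dist_eq, this]
    refine (abs_add_le _ _).trans ?_
    norm_num
    linarith
  set u := ContractingWith.fixedPoint Φ hΦ
  have hu : Φ u = u := hΦ.fixedPoint_isFixedPt
  have hue : ∀ r ∈ Icc (0:ℝ) 1, ext01 u r = V u r + c u := fun r hr => by
    rw [ext01_of_mem u hr]
    exact (DFunLike.congr_fun hu ⟨r, hr⟩).symm
  refine ⟨u, D u, ⟨⟨(hD u).continuousOn, fun r hr => ?_⟩, (continuous_ext01 h).continuousOn,
    fun r _ => hasDerivAt_pow_mul_radialPrimitive (hsrc u) r, by simp [D, radialPrimitive], ?_⟩⟩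
  · exact ((hVd u r).add_const (c u)).hasDerivWithinAt.congr hue (hue r hr)
  · have h1 : D u 1 = radialInt n fun s => ext01 u s - ext01 h s := by
      have := pow_mul_radialPrimitive (n := n) (x := fun s => ext01 u s - ext01 h s) 1
      simpa [radialInt] using this
    have h2 : radialInt n (ext01 u) = radialInt n (fun r => V u r + c u) := radialInt_congr hue
    rw [radialInt_add (hV u).continuousOn continuousOn_const, radialInt_const] at h2
    rw [h1, radialInt_sub (continuous_ext01 u).continuousOn (continuous_ext01 h).continuousOn, h2]
    have hpos : (n:ℝ) + 1 ≠ 0 := by positivity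
    simp only [c]
    field_simp
    ring

end Existence

section Resolvent

variable {n : ℕ} (hn : n ≠ 0)

/-- The solution operator of the radial Neumann problem for `-Δ + 1`. -/
noncomputable def neumannOp (h : C(Icc (0:ℝ) 1, ℝ)) : C(Icc (0:ℝ) 1, ℝ) :=
  (exists_isNeumannSol hn h).choose

/-- The radial derivative of `neumannOp hn h`. -/
noncomputable def neumannOpDeriv (h : C(Icc (0:ℝ) 1, ℝ)) : ℝ → ℝ :=
  (exists_isNeumannSol hn h).choose_spec.choose

lemma isNeumannSol_neumannOp (h : C(Icc (0:ℝ) 1, ℝ)) :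
    IsNeumannSol n (ext01 h) (ext01 (neumannOp hn h)) (neumannOpDeriv hn h) :=
  (exists_isNeumannSol hn h).choose_spec.choose_spec

lemma neumannOp_le_of_isNeumannSol {h : C(Icc (0:ℝ) 1, ℝ)} {k z w : ℝ → ℝ}
    (hz : IsNeumannSol n k z w) (hle : ∀ r : Icc (0:ℝ) 1, h r ≤ k r) (r : Icc (0:ℝ) 1) :
    neumannOp hn h r ≤ z r := by
  rw [← ext01_coe]
  refine (isNeumannSol_neumannOp hn h).le_of_source_le hz (fun s hs => ?_) r r.2
  rw [ext01_of_mem h hs]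
  exact hle ⟨s, hs⟩

lemma le_neumannOp_of_isNeumannSol {h : C(Icc (0:ℝ) 1, ℝ)} {k z w : ℝ → ℝ}
    (hz : IsNeumannSol n k z w) (hle : ∀ r : Icc (0:ℝ) 1, k r ≤ h r) (r : Icc (0:ℝ) 1) :
    z r ≤ neumannOp hn h r := by
  rw [← ext01_coe]
  refine hz.le_of_source_le (isNeumannSol_neumannOp hn h) (fun s hs => ?_) r r.2
  rw [ext01_of_mem h hs]
  exact hle ⟨s, hs⟩

lemma neumannOp_mono : Monotone (neumannOp hn) := by
  intro h k hle r
  have := neumannOp_le_of_isNeumannSol hn (isNeumannSol_neumannOp hn k) (h := h)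
    (fun s => by rw [ext01_coe]; exact hle s) r
  rwa [ext01_coe] at this

lemma neumannOp_const (c : ℝ) : neumannOp hn (.const _ c) = .const _ c := by
  ext r
  exact le_antisymm
    (neumannOp_le_of_isNeumannSol hn (IsNeumannSol.const n c) (fun _ => le_rfl) r)
    (le_neumannOp_of_isNeumannSol hn (IsNeumannSol.const n c) (fun _ => le_rfl) r)

lemma dist_neumannOp_le (h k : C(Icc (0:ℝ) 1, ℝ)) :
    dist (neumannOp hn h) (neumannOp hn k) ≤ dist h k := by
  rw [ContinuousMap.dist_le dist_nonneg]
  intro r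
  have key : ∀ s : Icc (0:ℝ) 1, |h s - k s| ≤ dist h k := fun s => by
    rw [← Real.dist_eq]; exact ContinuousMap.dist_apply_le_dist s
  have hd := (isNeumannSol_neumannOp hn h).sub (isNeumannSol_neumannOp hn k)
  have h1 := hd.le_of_source_le (IsNeumannSol.const n (dist h k))
    (fun s hs => by
      rw [ext01_of_mem h hs, ext01_of_mem k hs]; exact (abs_le.1 (key ⟨s, hs⟩)).2) r r.2
  have h2 := (IsNeumannSol.const n (-dist h k)).le_of_source_le hd
    (fun s hs => by
      rw [ext01_of_mem h hs, ext01_of_mem k hs]; exact (abs_le.1 (key ⟨s, hs⟩)).1) r r.2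
  simp only [ext01_coe] at h1 h2
  rw [Real.dist_eq, abs_le]
  exact ⟨h2, h1⟩

lemma continuous_neumannOp : Continuous (neumannOp hn) :=
  (LipschitzWith.of_dist_le_mul (K := 1) fun h k => by simpa using dist_neumannOp_le hn h k).continuous

lemma monotone_ext01_iff {u : C(Icc (0:ℝ) 1, ℝ)} : MonotoneOn (ext01 u) (Icc 0 1) ↔ Monotone u := by
  constructor
  · intro h r s hrs
    simpa only [ext01_coe] using h r.2 s.2 hrs
  · intro h r hr s hs hrs
    rw [ext01_of_mem u hr, ext01_of_mem u hs]
    exact h hrs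

lemma antitone_ext01_iff {u : C(Icc (0:ℝ) 1, ℝ)} : AntitoneOn (ext01 u) (Icc 0 1) ↔ Antitone u := by
  constructor
  · intro h r s hrs
    simpa only [ext01_coe] using h r.2 s.2 hrs
  · intro h r hr s hs hrs
    rw [ext01_of_mem u hr, ext01_of_mem u hs]
    exact h hrs

lemma monotone_neumannOp {h : C(Icc (0:ℝ) 1, ℝ)} (hh : Monotone h) : Monotone (neumannOp hn h) :=
  monotone_ext01_iff.1 ((isNeumannSol_neumannOp hn h).monotoneOn (monotone_ext01_iff.2 hh))

lemma antitone_neumannOp {h : C(Icc (0:ℝ) 1, ℝ)} (hh : Antitone h) : Antitone (neumannOp hn h) :=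
  antitone_ext01_iff.1 ((isNeumannSol_neumannOp hn h).antitoneOn (antitone_ext01_iff.2 hh))

/-- One step of the iteration for `-Δu + u = f(u)`. -/
noncomputable def picard (f : C(ℝ, ℝ)) (u : C(Icc (0:ℝ) 1, ℝ)) : C(Icc (0:ℝ) 1, ℝ) :=
  neumannOp hn (f.comp u)

/-- The radial derivative of `picard hn f u`. -/
noncomputable def picardDeriv (f : C(ℝ, ℝ)) (u : C(Icc (0:ℝ) 1, ℝ)) : ℝ → ℝ :=
  neumannOpDeriv hn (f.comp u)

variable {f : C(ℝ, ℝ)}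

lemma isNeumannSol_picard (f : C(ℝ, ℝ)) (u : C(Icc (0:ℝ) 1, ℝ)) :
    IsNeumannSol n (fun r => f (ext01 u r)) (ext01 (picard hn f u)) (picardDeriv hn f u) :=
  isNeumannSol_neumannOp hn (f.comp u)

lemma continuous_picard : Continuous (picard hn f) :=
  (continuous_neumannOp hn).comp (ContinuousMap.continuous_postcomp f)

lemma picard_mono (hf : Monotone f) : Monotone (picard hn f) := fun _ _ h =>
  neumannOp_mono hn fun r => hf (h r)

lemma picard_const (c : ℝ) : picard hn f (.const _ c) = .const _ (f c) := by
  rw [← neumannOp_const hn (f c)]; rfl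

lemma picard_nonneg (hf : ∀ x, 0 ≤ f x) (u : C(Icc (0:ℝ) 1, ℝ)) : 0 ≤ picard hn f u := by
  have : (0 : C(Icc (0:ℝ) 1, ℝ)) = neumannOp hn (.const _ 0) := (neumannOp_const hn 0).symm
  rw [this]
  exact neumannOp_mono hn fun r => hf _

lemma monotone_picard (hf : Monotone f) {u : C(Icc (0:ℝ) 1, ℝ)} (hu : Monotone u) :
    Monotone (picard hn f u) := monotone_neumannOp hn (hf.comp hu)

lemma antitone_picard (hf : Monotone f) {u : C(Icc (0:ℝ) 1, ℝ)} (hu : Antitone u) :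
    Antitone (picard hn f u) := antitone_neumannOp hn (hf.comp_antitone hu)

end Resolvent

section Energy

variable {n : ℕ} {f F : ℝ → ℝ} {u v w z : ℝ → ℝ}

/-- The energy functional of `-Δu + u = F'(u)` at `u` with derivative `v`. -/
noncomputable def energy (n : ℕ) (F u v : ℝ → ℝ) : ℝ :=
  radialInt n fun r => (v r ^ 2 + u r ^ 2) / 2 - F (u r)

/-- The iteration decreases the energy by at least half the squared `H¹` distance. -/
lemma energy_descent (hfc : Continuous f) (hFc : Continuous F)
    (hF : ∀ x y, F x + f x * (y - x) ≤ F y) (hu : IsC1On u v)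
    (hw : IsNeumannSol n (fun r => f (u r)) w z) :
    energy n F w z + radialInt n (fun r => (z r - v r) ^ 2 + (w r - u r) ^ 2) / 2
      ≤ energy n F u v := by
  have c1 := hu.continuousOn
  have c2 := hu.cont
  have c3 := hw.continuousOn
  have c4 := hw.cont
  have c5 : ContinuousOn (fun r => F (u r)) (Icc 0 1) := hFc.comp_continuousOn c1
  have c6 : ContinuousOn (fun r => F (w r)) (Icc 0 1) := hFc.comp_continuousOn c3
  have c7 : ContinuousOn (fun r => f (u r)) (Icc 0 1) := hfc.comp_continuousOn c1
  have g := hw.green (hw.toIsC1On.sub hu)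
  have e1 : radialInt n (fun r => f (u r) * (w r - u r)
      - (z r * (z r - v r) + w r * (w r - u r))) = 0 := by
    rw [radialInt_sub (by fun_prop) (by fun_prop)]; linarith
  have e2 : energy n F u v - energy n F w z =
      radialInt n (fun r => ((v r ^ 2 + u r ^ 2) / 2 - F (u r))
        - ((z r ^ 2 + w r ^ 2) / 2 - F (w r))) :=
    (radialInt_sub (by fun_prop) (by fun_prop)).symm
  have e3 : radialInt n (fun r => (z r - v r) ^ 2 + (w r - u r) ^ 2) / 2 =
      radialInt n (fun r => 1 / 2 * ((z r - v r) ^ 2 + (w r - u r) ^ 2)) := by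
    rw [radialInt_const_mul]; ring
  have key : radialInt n (fun r => (f (u r) * (w r - u r)
      - (z r * (z r - v r) + w r * (w r - u r)))
        + 1 / 2 * ((z r - v r) ^ 2 + (w r - u r) ^ 2)) ≤ _ :=
    radialInt_mono (k := fun r => ((v r ^ 2 + u r ^ 2) / 2 - F (u r))
        - ((z r ^ 2 + w r ^ 2) / 2 - F (w r))) (n := n) (by fun_prop) (by fun_prop)
      fun r _ => by nlinarith [hF (u r) (w r)]
  rw [← e2, radialInt_add (by fun_prop) (by fun_prop), e1, ← e3] at key
  linarith

lemma energy_eq_of_isNeumannSol (hfc : Continuous f) (hFc : Continuous F) (hu : ContinuousOn u (Icc 0 1))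
    (hw : IsNeumannSol n (fun r => f (u r)) w z) :
    energy n F w z = radialInt n (fun r => f (u r) * w r / 2 - F (w r)) := by
  have c3 := hw.continuousOn
  have c4 := hw.cont
  have c6 : ContinuousOn (fun r => F (w r)) (Icc 0 1) := hFc.comp_continuousOn c3
  have c7 : ContinuousOn (fun r => f (u r)) (Icc 0 1) := hfc.comp_continuousOn hu
  have g := hw.green hw.toIsC1On
  have e : radialInt n (fun r => 1 / 2 * (z r * z r + w r * w r)) =
      radialInt n (fun r => 1 / 2 * (f (u r) * w r)) := by
    rw [radialInt_const_mul, radialInt_const_mul, g]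
  have a : energy n F w z =
      radialInt n (fun r => 1 / 2 * (z r * z r + w r * w r) - F (w r)) := by
    unfold energy; congr 1; ext r; ring
  rw [a, radialInt_sub (by fun_prop) (by fun_prop), e,
    ← radialInt_sub (by fun_prop) (by fun_prop)]
  congr 1; ext r; ring

end Energy

section TestFunction

variable {n : ℕ} {u v g A B : ℝ → ℝ}

lemma IsC1On.monotoneOn (h : IsC1On u v) (hv : ∀ r ∈ Icc (0:ℝ) 1, 0 ≤ v r) :
    MonotoneOn u (Icc 0 1) := by
  apply monotoneOn_of_deriv_nonneg (convex_Icc _ _) h.continuousOn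
  · intro x hx
    rw [interior_Icc] at hx
    exact (h.hasDerivAt hx).differentiableAt.differentiableWithinAt
  · intro x hx
    rw [interior_Icc] at hx
    rw [(h.hasDerivAt hx).deriv]
    exact hv x (Ioo_subset_Icc_self hx)

lemma IsC1On.eq_of_deriv_eq_zero (h : IsC1On u v) (hv : ∀ r ∈ Icc (0:ℝ) 1, v r = 0) :
    ∀ r ∈ Icc (0:ℝ) 1, u r = u 0 := by
  intro r hr
  have h1 := h.monotoneOn fun s hs => (hv s hs).ge
  have h2 := ((IsC1On.const 0).sub h).monotoneOn fun s hs => by simp [hv s hs]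
  have h0 : (0:ℝ) ∈ Icc (0:ℝ) 1 := ⟨le_rfl, zero_le_one⟩
  have a := h1 h0 hr hr.1
  have b := h2 h0 hr hr.1
  simp only [zero_sub, neg_le_neg_iff] at b
  exact le_antisymm b a

lemma exists_isC1On_radialInt_eq_zero (n : ℕ) (hg : ContinuousOn g (Icc 0 1)) :
    ∃ G, IsC1On G g ∧ radialInt n G = 0 := by
  let e := IccExtend (zero_le_one (α := ℝ)) ((Icc 0 1).domRestrict g)
  have he : Continuous e := (continuousOn_iff_continuous_domRestrict.1 hg).Icc_extend'
  have heg : ∀ r ∈ Icc (0:ℝ) 1, e r = g r := fun r hr => IccExtend_of_mem _ _ hr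
  let P : ℝ → ℝ := fun r => ∫ s in (0:ℝ)..r, e s
  have hP : ∀ r, HasDerivAt P (e r) r := fun r =>
    intervalIntegral.integral_hasDerivAt_right (he.intervalIntegrable _ _)
      (he.stronglyMeasurableAtFilter _ _) he.continuousAt
  have hPc : Continuous P := continuous_iff_continuousAt.2 fun r => (hP r).continuousAt
  refine ⟨fun r => P r - (n + 1) * radialInt n P, ⟨hg, fun r hr => ?_⟩, ?_⟩
  · rw [← heg r hr]
    exact ((hP r).sub_const _).hasDerivWithinAt
  · rw [radialInt_sub hPc.continuousOn continuousOn_const, radialInt_const]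
    have hpos : (n:ℝ) + 1 ≠ 0 := by positivity
    field_simp
    ring

/-- A Chebyshev correlation inequality. -/
lemma radialInt_mul_nonneg_of_monotoneOn (hA : MonotoneOn A (Icc 0 1))
    (hB : MonotoneOn B (Icc 0 1)) (hAc : ContinuousOn A (Icc 0 1))
    (hBc : ContinuousOn B (Icc 0 1)) (h0 : radialInt n A = 0) :
    0 ≤ radialInt n fun r => A r * B r := by
  have m0 : (0:ℝ) ∈ Icc (0:ℝ) 1 := ⟨le_rfl, zero_le_one⟩
  have m1 : (1:ℝ) ∈ Icc (0:ℝ) 1 := ⟨zero_le_one, le_rfl⟩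
  have hpos : (0:ℝ) < n + 1 := by positivity
  have hA0 : A 0 ≤ 0 := by
    have := radialInt_mono (n := n) continuousOn_const hAc fun r hr => hA m0 hr hr.1
    rw [radialInt_const, h0, div_le_iff₀ hpos] at this
    linarith
  have hA1 : 0 ≤ A 1 := by
    have := radialInt_mono (n := n) hAc continuousOn_const fun r hr => hA hr m1 hr.2
    rw [radialInt_const, h0, le_div_iff₀ hpos] at this
    linarith
  obtain ⟨c, hc, hAc0⟩ := intermediate_value_Icc zero_le_one hAc ⟨hA0, hA1⟩
  have e : radialInt n (fun r => A r * B r) = radialInt n (fun r => A r * (B r - B c)) := by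
    have : radialInt n (fun r => A r * (B r - B c))
        = radialInt n (fun r => A r * B r - B c * A r) := by
      congr 1; ext r; ring
    rw [this, radialInt_sub (by fun_prop) (by fun_prop), radialInt_const_mul, h0]
    ring
  rw [e]
  refine radialInt_nonneg fun r hr => ?_
  rcases le_total r c with h | h
  · have h1 := hA hr hc h
    have h2 := hB hr hc h
    rw [hAc0] at h1
    exact mul_nonneg_of_nonpos_of_nonpos h1 (by linarith)
  · have h1 := hA hc hr h
    have h2 := hB hc hr h
    rw [hAc0] at h1
    exact mul_nonneg h1 (by linarith)

lemma exists_monotone_testFunction_of_pos {lam : ℝ} (hlam : 1 < lam)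
    (hu : IsNeumannSol n (fun r => lam * u r) u v) {a : ℝ} (ha : a ∈ Icc (0:ℝ) 1)
    (hva : 0 < v a) :
    ∃ ψ χ, IsC1On ψ χ ∧ MonotoneOn ψ (Icc 0 1) ∧ radialInt n ψ = 0 ∧
      0 < radialInt n (fun r => ψ r ^ 2) ∧
      radialInt n (fun r => χ r ^ 2) ≤ (lam - 1) * radialInt n (fun r => ψ r ^ 2) := by
  have hvc := hu.cont
  have huc := hu.continuousOn
  have hpc : ContinuousOn (fun r => max (v r) 0) (Icc 0 1) := by fun_prop
  have hqc : ContinuousOn (fun r => max (-v r) 0) (Icc 0 1) := by fun_prop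
  obtain ⟨ψ, hψ, hψ0⟩ := exists_isC1On_radialInt_eq_zero n hpc
  obtain ⟨ζ, hζ, hζ0⟩ := exists_isC1On_radialInt_eq_zero n hqc
  have hψc := hψ.continuousOn
  have hζc := hζ.continuousOn
  have hψm := hψ.monotoneOn fun r _ => le_max_right _ _
  have hζm := hζ.monotoneOn fun r _ => le_max_right _ _
  have hpos : (0:ℝ) < n + 1 := by positivity
  have hu0 : radialInt n u = 0 := by
    have g := hu.green (IsC1On.const 1)
    have e1 : radialInt n (fun r => v r * 0 + u r * 1) = radialInt n u := by
      congr 1; ext r; ring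
    have e2 : radialInt n (fun r => lam * u r * 1) = lam * radialInt n u := by
      rw [← radialInt_const_mul]; congr 1; ext r; ring
    rw [e1, e2] at g
    have : (lam - 1) * radialInt n u = 0 := by linarith
    rcases mul_eq_zero.1 this with h | h
    · linarith
    · exact h
  have hdec : ∀ r ∈ Icc (0:ℝ) 1, u r = ψ r - ζ r := by
    have hd := (hu.toIsC1On.sub (hψ.sub hζ)).eq_of_deriv_eq_zero fun r _ => by
      rcases le_total (v r) 0 with h | h
      · rw [max_eq_right h, max_eq_left (neg_nonneg.2 h)]; ring
      · rw [max_eq_left h, max_eq_right (neg_nonpos.2 h)]; ring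
    have hi : radialInt n (fun r => u r - (ψ r - ζ r)) = 0 := by
      rw [radialInt_sub (by fun_prop) (by fun_prop), radialInt_sub hψc hζc, hu0, hψ0, hζ0]
      ring
    rw [radialInt_congr hd, radialInt_const] at hi
    have h0 : u 0 - (ψ 0 - ζ 0) = 0 := (div_eq_zero_iff.1 hi).resolve_right hpos.ne'
    intro r hr
    have := hd r hr
    linarith
  have hcheb := radialInt_mul_nonneg_of_monotoneOn hζm hψm hζc hψc hζ0
  refine ⟨ψ, _, hψ, hψm, hψ0, ?_, ?_⟩
  · by_contra! hle
    have hz := eq_zero_of_radialInt_le_zero (by fun_prop) (fun r _ => sq_nonneg (ψ r)) hle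
    have hz' : ∀ r ∈ Icc (0:ℝ) 1, ψ r = 0 := fun r hr => by simpa using hz r hr
    have hd : HasDerivWithinAt ψ 0 (Icc 0 1) a :=
      (hasDerivWithinAt_const a _ (0:ℝ)).congr hz' (hz' a ha)
    have := (uniqueDiffOn_Icc zero_lt_one a ha).eq_deriv _ (hψ.deriv a ha) hd
    rw [max_eq_left hva.le] at this
    linarith
  · have g := hu.green hψ
    have e1 : radialInt n (fun r => v r * max (v r) 0 + u r * ψ r) =
        radialInt n (fun r => max (v r) 0 ^ 2) + radialInt n (fun r => u r * ψ r) := by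
      rw [← radialInt_add (by fun_prop) (by fun_prop)]
      congr 1; ext r
      rcases le_total (v r) 0 with h | h
      · simp [max_eq_right h]
      · rw [max_eq_left h]; ring
    have e2 : radialInt n (fun r => lam * u r * ψ r) = lam * radialInt n (fun r => u r * ψ r) := by
      rw [← radialInt_const_mul]; congr 1; ext r; ring
    have e3 : radialInt n (fun r => u r * ψ r) =
        radialInt n (fun r => ψ r ^ 2) - radialInt n (fun r => ζ r * ψ r) := by
      rw [← radialInt_sub (by fun_prop) (by fun_prop)]
      exact radialInt_congr fun r hr => by rw [hdec r hr]; ring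
    rw [e1, e2] at g
    have : radialInt n (fun r => u r * ψ r) ≤ radialInt n (fun r => ψ r ^ 2) := by linarith
    nlinarith

/-- A nonzero Neumann eigenfunction produces a monotone function of zero mean whose Rayleigh
quotient does not exceed the eigenvalue. -/
lemma exists_monotone_testFunction {lam : ℝ} (hlam : 1 < lam)
    (hu : IsNeumannSol n (fun r => lam * u r) u v) (hne : ∃ r ∈ Icc (0:ℝ) 1, u r ≠ 0) :
    ∃ ψ χ, IsC1On ψ χ ∧ MonotoneOn ψ (Icc 0 1) ∧ radialInt n ψ = 0 ∧
      0 < radialInt n (fun r => ψ r ^ 2) ∧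
      radialInt n (fun r => χ r ^ 2) ≤ (lam - 1) * radialInt n (fun r => ψ r ^ 2) := by
  by_cases hv : ∃ a ∈ Icc (0:ℝ) 1, v a ≠ 0
  · obtain ⟨a, ha, hva⟩ := hv
    rcases lt_or_gt_of_ne hva with h | h
    · have hneg : IsNeumannSol n (fun r => lam * -u r) (fun r => -u r) fun r => -v r := by
        simpa only [mul_neg] using hu.neg
      exact exists_monotone_testFunction_of_pos hlam hneg ha (neg_pos.2 h)
    · exact exists_monotone_testFunction_of_pos hlam hu ha h
  · push Not at hv
    exfalso
    have huc := hu.continuousOn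
    have g := hu.green hu.toIsC1On
    have e1 : radialInt n (fun r => v r * v r + u r * u r) = radialInt n (fun r => u r ^ 2) :=
      radialInt_congr fun r hr => by rw [hv r hr]; ring
    have e2 : radialInt n (fun r => lam * u r * u r) = lam * radialInt n (fun r => u r ^ 2) := by
      rw [← radialInt_const_mul]; congr 1; ext r; ring
    rw [e1, e2] at g
    have h0 : radialInt n (fun r => u r ^ 2) ≤ 0 := by nlinarith
    obtain ⟨r, hr, hur⟩ := hne
    have := eq_zero_of_radialInt_le_zero (by fun_prop) (fun r _ => sq_nonneg (u r)) h0 r hr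
    exact hur (by simpa using this)

end TestFunction

section Pointwise

variable {n : ℕ} {f F : ℝ → ℝ} {u v w z : ℝ → ℝ}

lemma IsC1On.sq_one_le (h : IsC1On u v) :
    u 1 ^ 2 ≤ (n + 2) * radialInt n fun r => v r ^ 2 + u r ^ 2 := by
  have hu := h.continuousOn
  have hv := h.cont
  have key : ∫ r in (0:ℝ)..1, ((n + 1 : ℕ) * r ^ n * u r ^ 2 + r ^ (n + 1) * (2 * u r * v r))
      = 1 ^ (n + 1) * u 1 ^ 2 - 0 ^ (n + 1) * u 0 ^ 2 := by
    apply intervalIntegral.integral_eq_sub_of_hasDerivAt_of_le zero_le_one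
      (f := fun r => r ^ (n + 1) * u r ^ 2)
    · fun_prop
    · intro r hr
      refine ((hasDerivAt_pow (n + 1) r).mul ((h.hasDerivAt hr).pow 2)).congr_deriv ?_
      simp
    · apply ContinuousOn.intervalIntegrable
      rw [uIcc_of_le zero_le_one]
      fun_prop
  rw [← radialInt_const_mul]
  have e : ∀ r, ((n + 1 : ℕ) * r ^ n * u r ^ 2 + r ^ (n + 1) * (2 * u r * v r)) =
      r ^ n * ((n + 1) * u r ^ 2 + r * (2 * u r * v r)) := fun r => by push_cast; ring
  simp only [e] at key
  have h1 : u 1 ^ 2 = radialInt n fun r => (n + 1) * u r ^ 2 + r * (2 * u r * v r) := by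
    rw [radialInt, key]; simp
  rw [h1]
  refine radialInt_mono (by fun_prop) (by fun_prop) fun r hr => ?_
  have h2 : r * (2 * u r * v r) ≤ u r ^ 2 + v r ^ 2 := by
    have : r * r ≤ 1 := by nlinarith [hr.1, hr.2]
    nlinarith [sq_nonneg (u r - r * v r), sq_nonneg (v r)]
  have : 0 ≤ (n + 1 : ℝ) * v r ^ 2 := by positivity
  nlinarith

/-- A radial function of finite `H¹` norm blows up at most like `r ^ (-β / 2)` at the origin. -/
lemma IsC1On.rpow_mul_sq_le (h : IsC1On u v) {β : ℝ} (hβ : 0 < β) (hβn : (n:ℝ) ≤ β + 1)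
    {r : ℝ} (hr : r ∈ Ioc (0:ℝ) 1) :
    r ^ β * u r ^ 2 ≤ (n + 2 + 1 / β) * radialInt n fun r => v r ^ 2 + u r ^ 2 := by
  have hu := h.continuousOn
  have hv := h.cont
  have hsub : Icc r 1 ⊆ Icc 0 1 := Icc_subset_Icc_left hr.1.le
  have hne : ∀ s ∈ Icc r 1, s ≠ 0 := fun s hs => (hr.1.trans_le hs.1).ne'
  have hrp : ContinuousOn (fun s : ℝ => s ^ β) (Icc r 1) := fun s hs =>
    (Real.continuousAt_rpow_const s β (.inl (hne s hs))).continuousWithinAt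
  have hrp' : ContinuousOn (fun s : ℝ => s ^ (β - 1)) (Icc r 1) := fun s hs =>
    (Real.continuousAt_rpow_const s (β - 1) (.inl (hne s hs))).continuousWithinAt
  have hu' := hu.mono hsub
  have hv' := hv.mono hsub
  have hd : ∀ s ∈ Ioo r 1, HasDerivAt (fun s => s ^ β * u s ^ 2)
      (β * s ^ (β - 1) * u s ^ 2 + s ^ β * (2 * u s * v s)) s := fun s hs => by
    have hs0 : 0 < s := hr.1.trans hs.1
    refine ((Real.hasDerivAt_rpow_const (.inl hs0.ne')).mul
      ((h.hasDerivAt ⟨hs0, hs.2⟩).pow 2)).congr_deriv ?_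
    simp
  have hint : IntervalIntegrable (fun s => β * s ^ (β - 1) * u s ^ 2 + s ^ β * (2 * u s * v s))
      MeasureTheory.volume r 1 := by
    apply ContinuousOn.intervalIntegrable
    rw [uIcc_of_le hr.2]
    fun_prop
  have hint' : IntervalIntegrable (fun s => s ^ n * v s ^ 2) MeasureTheory.volume r 1 := by
    apply ContinuousOn.intervalIntegrable
    rw [uIcc_of_le hr.2]
    fun_prop
  have key := intervalIntegral.integral_eq_sub_of_hasDerivAt_of_le hr.2 (by fun_prop) hd hint
  have h1 : ∫ s in r..1, -(1 / β) * (s ^ n * v s ^ 2) ≤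
      ∫ s in r..1, (β * s ^ (β - 1) * u s ^ 2 + s ^ β * (2 * u s * v s)) := by
    refine intervalIntegral.integral_mono_on hr.2 (hint'.const_mul _) hint fun s hs => ?_
    have hs0 : 0 < s := hr.1.trans_le hs.1
    have e1 : s ^ β = s ^ (β - 1) * s := by
      rw [← Real.rpow_add_one hs0.ne']; ring_nf
    have e2 : s ^ (β - 1) * s * s ≤ s ^ n := by
      rw [← e1, ← Real.rpow_add_one hs0.ne', ← Real.rpow_natCast]
      exact Real.rpow_le_rpow_of_exponent_ge hs0 hs.2 hβn
    have e3 : 0 ≤ s ^ (β - 1) / β * (β * u s + s * v s) ^ 2 := by positivity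
    have e4 : s ^ (β - 1) / β * (β * u s + s * v s) ^ 2 = β * s ^ (β - 1) * u s ^ 2 +
        s ^ (β - 1) * s * (2 * u s * v s) + 1 / β * ((s ^ (β - 1) * s * s) * v s ^ 2) := by
      field_simp; ring
    have e5 : 1 / β * ((s ^ (β - 1) * s * s) * v s ^ 2) ≤ 1 / β * (s ^ n * v s ^ 2) := by
      gcongr
    rw [e1]
    linarith
  have h2 : ∫ s in r..1, s ^ n * v s ^ 2 ≤ radialInt n fun r => v r ^ 2 + u r ^ 2 := by
    have a1 : ∫ s in r..1, s ^ n * v s ^ 2 ≤ radialInt n fun r => v r ^ 2 := by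
      refine intervalIntegral.integral_mono_interval hr.1.le hr.2 le_rfl ?_
        (radialInt_intervalIntegrable (by fun_prop))
      refine (MeasureTheory.ae_restrict_iff' measurableSet_Ioc).2 (.of_forall fun s hs => ?_)
      exact mul_nonneg (pow_nonneg hs.1.le n) (sq_nonneg _)
    refine a1.trans (radialInt_mono (by fun_prop) (by fun_prop) fun s _ => ?_)
    nlinarith [sq_nonneg (u s)]
  rw [key, intervalIntegral.integral_const_mul, Real.one_rpow, one_mul] at h1
  have h3 := h.sq_one_le (n := n)
  have h4 : 1 / β * ∫ s in r..1, s ^ n * v s ^ 2 ≤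
      1 / β * radialInt n fun r => v r ^ 2 + u r ^ 2 := by gcongr
  linarith

/-- `H¹` bound obtained from the energy and the Ambrosetti–Rabinowitz condition. -/
lemma h1_le_of_energy_le {μ c : ℝ} (hμ : 2 < μ) (hfc : Continuous f) (hFc : Continuous F)
    (hAR : ∀ s, 0 ≤ s → F s ≤ f s * s / μ + c) (hu : IsC1On u v)
    (hpos : ∀ r ∈ Icc (0:ℝ) 1, 0 ≤ u r) (hw : IsNeumannSol n (fun r => f (u r)) w z) :
    (μ - 2) / (4 * μ) * radialInt n (fun r => v r ^ 2 + u r ^ 2) ≤ energy n F u v +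
      1 / (μ * (μ - 2)) * radialInt n (fun r => (z r - v r) ^ 2 + (w r - u r) ^ 2)
      + c / (n + 1) := by
  have c1 := hu.continuousOn
  have c2 := hu.cont
  have c3 := hw.continuousOn
  have c4 := hw.cont
  have c5 : ContinuousOn (fun r => F (u r)) (Icc 0 1) := hFc.comp_continuousOn c1
  have c7 : ContinuousOn (fun r => f (u r)) (Icc 0 1) := hfc.comp_continuousOn c1
  have hμ0 : 0 < μ := by linarith
  have hk : 0 < μ - 2 := by linarith
  have g := hw.green hu
  have young : ∀ x y : ℝ, (y + x) * x ≤ (1 + (μ - 2) / 4) * x ^ 2 + 1 / (μ - 2) * y ^ 2 := by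
    intro x y
    have e : (1 + (μ - 2) / 4) * x ^ 2 + 1 / (μ - 2) * y ^ 2 - (y + x) * x =
      1 / (μ - 2) * (y - (μ - 2) / 2 * x) ^ 2 := by field_simp; ring
    have : 0 ≤ 1 / (μ - 2) * (y - (μ - 2) / 2 * x) ^ 2 := by positivity
    linarith
  have g1 : radialInt n (fun r => f (u r) * u r) ≤
      (1 + (μ - 2) / 4) * radialInt n (fun r => v r ^ 2 + u r ^ 2) +
      1 / (μ - 2) * radialInt n (fun r => (z r - v r) ^ 2 + (w r - u r) ^ 2) := by
    rw [← g, ← radialInt_const_mul, ← radialInt_const_mul,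
      ← radialInt_add (by fun_prop) (by fun_prop)]
    refine radialInt_mono (by fun_prop) (by fun_prop) fun r _ => ?_
    have a := young (v r) (z r - v r)
    have b := young (u r) (w r - u r)
    simp only [sub_add_cancel] at a b
    linarith
  have g2 : radialInt n (fun r => F (u r)) ≤
      1 / μ * radialInt n (fun r => f (u r) * u r) + c / (n + 1) := by
    rw [← radialInt_const_mul, ← radialInt_const, ← radialInt_add (by fun_prop) (by fun_prop)]
    refine radialInt_mono (by fun_prop) (by fun_prop) fun r hr => ?_
    have := hAR (u r) (hpos r hr)
    calc _ ≤ _ := this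
      _ = _ := by ring
  have g3 : energy n F u v = 1 / 2 * radialInt n (fun r => v r ^ 2 + u r ^ 2)
      - radialInt n (fun r => F (u r)) := by
    rw [← radialInt_const_mul, ← radialInt_sub (by fun_prop) (by fun_prop)]
    unfold energy; congr 1; ext r; ring
  have g4 : 1 / μ * radialInt n (fun r => f (u r) * u r) ≤
      1 / μ * ((1 + (μ - 2) / 4) * radialInt n (fun r => v r ^ 2 + u r ^ 2) +
      1 / (μ - 2) * radialInt n (fun r => (z r - v r) ^ 2 + (w r - u r) ^ 2)) := by gcongr
  have e1 : 1 / μ * ((1 + (μ - 2) / 4) * radialInt n (fun r => v r ^ 2 + u r ^ 2) +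
      1 / (μ - 2) * radialInt n (fun r => (z r - v r) ^ 2 + (w r - u r) ^ 2)) =
      1 / 2 * radialInt n (fun r => v r ^ 2 + u r ^ 2) - (μ - 2) / (4 * μ) *
        radialInt n (fun r => v r ^ 2 + u r ^ 2) + 1 / (μ * (μ - 2)) *
        radialInt n (fun r => (z r - v r) ^ 2 + (w r - u r) ^ 2) := by
    field_simp; ring
  linarith

lemma IsNeumannSol.neg_rpow_le_deriv {h : ℝ → ℝ} (hs : IsNeumannSol n h u v) {K τ : ℝ}
    (hτ : 0 < n + 1 + τ) (hu : ∀ r ∈ Ioo (0:ℝ) 1, -K * r ^ τ ≤ u r - h r) :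
    ∀ r ∈ Ioc (0:ℝ) 1, -(K / (n + 1 + τ)) * r ^ (1 + τ) ≤ v r := by
  have hq := hs.flux_continuousOn
  have hrp : Continuous fun r : ℝ => r ^ ((n:ℝ) + 1 + τ) := Real.continuous_rpow_const hτ.le
  have hm : MonotoneOn (fun r => r ^ n * v r + K / (n + 1 + τ) * r ^ ((n:ℝ) + 1 + τ))
      (Icc 0 1) := by
    have hd : ∀ r ∈ Ioo (0:ℝ) 1, HasDerivAt
        (fun r => r ^ n * v r + K / (n + 1 + τ) * r ^ ((n:ℝ) + 1 + τ))
        (r ^ n * (u r - h r + K * r ^ τ)) r := fun r hr => by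
      refine ((hs.flux r hr).add ((Real.hasDerivAt_rpow_const
        (.inl hr.1.ne')).const_mul (K / (n + 1 + τ)))).congr_deriv ?_
      have : r ^ ((n:ℝ) + 1 + τ - 1) = r ^ n * r ^ τ := by
        rw [← Real.rpow_natCast, ← Real.rpow_add hr.1]; ring_nf
      rw [this]
      field_simp
    apply monotoneOn_of_deriv_nonneg (convex_Icc _ _) (by fun_prop)
    · intro x hx
      rw [interior_Icc] at hx
      exact (hd x hx).differentiableAt.differentiableWithinAt
    · intro x hx
      rw [interior_Icc] at hx
      rw [(hd x hx).deriv]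
      exact mul_nonneg (pow_nonneg hx.1.le n) (by linarith [hu x hx])
  intro r hr
  have := hm ⟨le_rfl, zero_le_one⟩ (Ioc_subset_Icc_self hr) hr.1.le
  simp only [hs.left, mul_zero, Real.zero_rpow hτ.ne', add_zero] at this
  have e : r ^ ((n:ℝ) + 1 + τ) = r ^ n * r ^ (1 + τ) := by
    rw [← Real.rpow_natCast, ← Real.rpow_add hr.1]; ring_nf
  rw [e] at this
  have h2 : 0 ≤ r ^ n * (v r + K / (n + 1 + τ) * r ^ (1 + τ)) := by linarith
  have := nonneg_of_mul_nonneg_right h2 (pow_pos hr.1 n)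
  linarith

lemma IsNeumannSol.abs_deriv_le {h : ℝ → ℝ} (hs : IsNeumannSol n h u v) {K : ℝ}
    (hu : ∀ r ∈ Icc (0:ℝ) 1, |u r - h r| ≤ K) : ∀ r ∈ Icc (0:ℝ) 1, |v r| ≤ K := by
  have hpos : (0:ℝ) < n + 1 + 0 := by positivity
  have hK : 0 ≤ K := (abs_nonneg _).trans (hu 0 ⟨le_rfl, zero_le_one⟩)
  intro r hr
  rcases hr.1.eq_or_lt with rfl | hr0
  · simpa [hs.left] using hK
  have h1 := hs.neg_rpow_le_deriv (K := K) hpos (fun s hs' => by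
    have := (abs_le.1 (hu s (Ioo_subset_Icc_self hs'))).1
    simpa using this) r ⟨hr0, hr.2⟩
  have h2 := hs.neg.neg_rpow_le_deriv (K := K) hpos (fun s hs' => by
    have := (abs_le.1 (hu s (Ioo_subset_Icc_self hs'))).2
    simp only [Real.rpow_zero]; linarith) r ⟨hr0, hr.2⟩
  simp only [add_zero, Real.rpow_one] at h1 h2
  have h3 : K / (n + 1) * r ≤ K := by
    calc K / (n + 1) * r ≤ K / (n + 1) * 1 := by gcongr; exact hr.2
      _ ≤ K := by
        rw [mul_one]; exact div_le_self hK (by linarith [(Nat.cast_nonneg n : (0:ℝ) ≤ n)])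
  rw [abs_le]
  constructor <;> linarith

end Pointwise

section SupBound

variable {n : ℕ}

lemma rpow_sub_one_le_of_rpow_mul_sq_le {p β B r x M : ℝ} (hp : 2 < p) (hB : 0 ≤ B) (hr : 0 < r)
    (hx : 0 ≤ x) (hxM : x ≤ M) (h : r ^ β * x ^ 2 ≤ B) :
    x ^ (p - 1) ≤ B ^ ((p - 2) / 2) * M * r ^ (-(β * (p - 2) / 2)) := by
  have hM : 0 ≤ M := hx.trans hxM
  have e1 : x ^ (p - 1) = x ^ (p - 2) * x := by
    rw [← Real.rpow_add_one' hx (by linarith)]; ring_nf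
  have e2 : x ^ (p - 2) = (x ^ 2) ^ ((p - 2) / 2) := by
    rw [← Real.rpow_natCast, ← Real.rpow_mul hx]; congr 1; push_cast; ring
  have e3 : x ^ 2 ≤ B * r ^ (-β) := by
    rw [Real.rpow_neg hr.le, ← div_eq_mul_inv, le_div_iff₀ (Real.rpow_pos_of_pos hr β)]
    linarith
  have e4 : (B * r ^ (-β)) ^ ((p - 2) / 2) =
      B ^ ((p - 2) / 2) * r ^ (-(β * (p - 2) / 2)) := by
    rw [Real.mul_rpow hB (Real.rpow_nonneg hr.le _), ← Real.rpow_mul hr.le]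
    congr 2; ring
  have e5 : (x ^ 2) ^ ((p - 2) / 2) ≤ (B * r ^ (-β)) ^ ((p - 2) / 2) :=
    Real.rpow_le_rpow (sq_nonneg x) e3 (by linarith)
  rw [e4] at e5
  rw [e1, e2]
  calc (x ^ 2) ^ ((p - 2) / 2) * x ≤ (B ^ ((p - 2) / 2) * r ^ (-(β * (p - 2) / 2))) * M := by
        gcongr
    _ = _ := by ring

/-- For subcritical growth one step of the iteration halves the supremum, up to a constant
controlled by the `H¹` norm. -/
lemma exists_sup_le_half {p C β B : ℝ} (hn : n ≠ 0) (hp : 2 < p) (hC : 0 < C) (hβ : 0 < β)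
    (hσ : β * (p - 2) < 4) (hB : 0 ≤ B) :
    ∃ L : ℝ, ∀ {f u w z : ℝ → ℝ} {M : ℝ}, (∀ s, 0 ≤ s → f s ≤ C * s ^ (p - 1)) →
      (∀ r ∈ Icc (0:ℝ) 1, 0 ≤ u r) → (∀ r ∈ Icc (0:ℝ) 1, u r ≤ M) →
      (∀ r ∈ Ioc (0:ℝ) 1, r ^ β * u r ^ 2 ≤ B) → IsNeumannSol n (fun r => f (u r)) w z →
      (∀ r ∈ Icc (0:ℝ) 1, 0 ≤ w r) → (∀ r ∈ Ioc (0:ℝ) 1, r ^ β * w r ^ 2 ≤ B) →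
      ∀ r ∈ Icc (0:ℝ) 1, w r ≤ L + M / 2 := by
  obtain ⟨τ, hτ⟩ : ∃ τ, τ = -(β * (p - 2) / 2) := ⟨_, rfl⟩
  have hτ2 : 0 < 2 + τ := by linarith
  have hn1 : (1:ℝ) ≤ n := by exact_mod_cast Nat.one_le_iff_ne_zero.2 hn
  have hτn : 0 < n + 1 + τ := by linarith
  obtain ⟨D, hD⟩ : ∃ D, D = C * B ^ ((p - 2) / 2) := ⟨_, rfl⟩
  have hD0 : 0 ≤ D := by rw [hD]; positivity
  obtain ⟨r₀, ⟨hr₀, hr₀1⟩, hκ⟩ : ∃ r₀ : ℝ, (0 < r₀ ∧ r₀ ≤ 1) ∧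
      D / (n + 1 + τ) / (2 + τ) * r₀ ^ (2 + τ) < 1 / 2 := by
    have ht : Tendsto (fun r : ℝ => D / (n + 1 + τ) / (2 + τ) * r ^ (2 + τ)) (𝓝[>] 0) (𝓝 0) := by
      have := ((Real.continuous_rpow_const hτ2.le).const_mul
        (D / (n + 1 + τ) / (2 + τ))).tendsto 0
      rw [Real.zero_rpow hτ2.ne', mul_zero] at this
      exact this.mono_left nhdsWithin_le_nhds
    have h1 := ht.eventually_lt_const (show (0:ℝ) < 1 / 2 by norm_num)
    have h2 : ∀ᶠ r : ℝ in 𝓝[>] 0, r ∈ Ioc (0:ℝ) 1 := Ioc_mem_nhdsGT zero_lt_one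
    exact (h2.and h1).exists
  refine ⟨√(B * r₀ ^ (-β)), ?_⟩
  intro f u w z M hf hu huM huB hw hw0 hwB
  have hM : 0 ≤ M := (hu 0 ⟨le_rfl, zero_le_one⟩).trans (huM 0 ⟨le_rfl, zero_le_one⟩)
  have hout : ∀ r ∈ Icc r₀ 1, w r ≤ √(B * r₀ ^ (-β)) := fun r hr => by
    have hr' : 0 < r := hr₀.trans_le hr.1
    apply Real.le_sqrt_of_sq_le
    rw [Real.rpow_neg hr₀.le, ← div_eq_mul_inv, le_div_iff₀ (Real.rpow_pos_of_pos hr₀ β)]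
    calc w r ^ 2 * r₀ ^ β ≤ w r ^ 2 * r ^ β := by
          gcongr; exact hr.1
      _ ≤ B := by rw [mul_comm]; exact hwB r ⟨hr', hr.2⟩
  have hz := hw.neg_rpow_le_deriv (K := D * M) hτn fun r hr => by
    have hr' := Ioo_subset_Icc_self hr
    have h1 := rpow_sub_one_le_of_rpow_mul_sq_le hp hB hr.1 (hu r hr') (huM r hr')
      (huB r (Ioo_subset_Ioc_self hr))
    have h2 := hf (u r) (hu r hr')
    have h3 := mul_le_mul_of_nonneg_left h1 hC.le
    have h4 := hw0 r hr'
    rw [← hτ] at h3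
    have h5 : C * (B ^ ((p - 2) / 2) * M * r ^ τ) = D * M * r ^ τ := by rw [hD]; ring
    linarith
  have hrp : Continuous fun r : ℝ => r ^ (2 + τ) := Real.continuous_rpow_const hτ2.le
  have hwc := hw.continuousOn
  obtain ⟨κ, hκd⟩ : ∃ κ, κ = D * M / (n + 1 + τ) / (2 + τ) := ⟨_, rfl⟩
  have hmono : MonotoneOn (fun r => w r + κ * r ^ (2 + τ)) (Icc 0 1) := by
    have hd : ∀ r ∈ Ioo (0:ℝ) 1, HasDerivAt (fun r => w r + κ * r ^ (2 + τ))
        (z r + D * M / (n + 1 + τ) * r ^ (1 + τ)) r := fun r hr => by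
      refine ((hw.hasDerivAt hr).add ((Real.hasDerivAt_rpow_const
        (.inl hr.1.ne')).const_mul κ)).congr_deriv ?_
      have : (2 + τ - 1) = 1 + τ := by ring
      rw [this, hκd]
      field_simp
    apply monotoneOn_of_deriv_nonneg (convex_Icc _ _) (by fun_prop)
    · intro x hx
      rw [interior_Icc] at hx
      exact (hd x hx).differentiableAt.differentiableWithinAt
    · intro x hx
      rw [interior_Icc] at hx
      rw [(hd x hx).deriv]
      linarith [hz x (Ioo_subset_Ioc_self hx)]
  intro r hr
  rcases le_total r₀ r with h | h
  · linarith [hout r ⟨h, hr.2⟩]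
  · have h1 := hmono hr ⟨hr₀.le, hr₀1⟩ h
    have h2 := hout r₀ ⟨le_rfl, hr₀1⟩
    have hκ0 : 0 ≤ κ := by rw [hκd]; positivity
    have h3 : 0 ≤ κ * r ^ (2 + τ) := mul_nonneg hκ0 (Real.rpow_nonneg hr.1 _)
    have h4 : κ * r₀ ^ (2 + τ) ≤ M / 2 := by
      have : κ * r₀ ^ (2 + τ) = M * (D / (n + 1 + τ) / (2 + τ) * r₀ ^ (2 + τ)) := by
        rw [hκd]; ring
      rw [this]
      nlinarith
    simp only at h1
    linarith

end SupBound

/-- A nonnegative nondecreasing nonlinearity with primitive `F`, of subcritical growth for the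
radial dimension `n + 1`, satisfying the Ambrosetti–Rabinowitz condition. -/
structure IsSubcritical (n : ℕ) (f : C(ℝ, ℝ)) (F : ℝ → ℝ) : Prop where
  mono : Monotone f
  eq_zero : ∀ s ≤ 0, f s = 0
  hasDerivAt : ∀ s, HasDerivAt F (f s) s
  primitive_zero : F 0 = 0
  growth : ∃ p C β : ℝ, 2 < p ∧ 0 < C ∧ 0 < β ∧ (n : ℝ) ≤ β + 1 ∧ β * (p - 2) < 4 ∧
    ∀ s, 0 ≤ s → f s ≤ C * s ^ (p - 1)
  superquadratic : ∃ μ c : ℝ, 2 < μ ∧ ∀ s, 0 ≤ s → F s ≤ f s * s / μ + c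

namespace IsSubcritical

variable {n : ℕ} {f : C(ℝ, ℝ)} {F : ℝ → ℝ}

lemma nonneg (hf : IsSubcritical n f F) (s : ℝ) : 0 ≤ f s := by
  rcases le_total s 0 with h | h
  · exact (hf.eq_zero s h).ge
  · exact (hf.eq_zero 0 le_rfl).ge.trans (hf.mono h)

lemma continuous_primitive (hf : IsSubcritical n f F) : Continuous F :=
  continuous_iff_continuousAt.2 fun s => (hf.hasDerivAt s).continuousAt

lemma add_mul_le (hf : IsSubcritical n f F) (x y : ℝ) : F x + f x * (y - x) ≤ F y := by
  have hd : deriv F = f := funext fun s => (hf.hasDerivAt s).deriv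
  have hc : ConvexOn ℝ univ F := by
    apply MonotoneOn.convexOn_of_deriv convex_univ hf.continuous_primitive.continuousOn
    · exact fun s _ => (hf.hasDerivAt s).differentiableAt.differentiableWithinAt
    · rw [hd]; exact hf.mono.monotoneOn _
  rcases lt_trichotomy x y with h | rfl | h
  · have := hc.le_slope_of_hasDerivAt (mem_univ x) (mem_univ y) h (hf.hasDerivAt x)
    rw [slope_def_field, le_div_iff₀ (sub_pos.2 h)] at this
    linarith
  · simp
  · have := hc.slope_le_of_hasDerivAt (mem_univ y) (mem_univ x) h (hf.hasDerivAt x)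
    rw [slope_def_field, div_le_iff₀ (sub_pos.2 h)] at this
    linarith

lemma primitive_mono (hf : IsSubcritical n f F) : Monotone F := fun x y h => by
  have := hf.add_mul_le x y
  nlinarith [mul_nonneg (hf.nonneg x) (sub_nonneg.2 h)]

end IsSubcritical

section Orbit

variable {n : ℕ} (hn : n ≠ 0) {f : C(ℝ, ℝ)} {F : ℝ → ℝ}

/-- The energy after one step of the iteration. -/
noncomputable def stepEnergy (f : C(ℝ, ℝ)) (F : ℝ → ℝ) (u : C(Icc (0:ℝ) 1, ℝ)) : ℝ :=
  energy n F (ext01 (picard hn f u)) (picardDeriv hn f u)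

lemma stepEnergy_eq (hF : Continuous F) (u : C(Icc (0:ℝ) 1, ℝ)) :
    stepEnergy hn f F u = radialInt n (fun r =>
      f (ext01 u r) * ext01 (picard hn f u) r / 2 - F (ext01 (picard hn f u) r)) :=
  energy_eq_of_isNeumannSol f.continuous hF (continuous_ext01 u).continuousOn
    (isNeumannSol_picard hn f u)

lemma continuous_stepEnergy (hF : Continuous F) : Continuous (stepEnergy hn f F) := by
  have he : stepEnergy hn f F = fun u => radialInt n (fun r =>
      f (ext01 u r) * ext01 (picard hn f u) r / 2 - F (ext01 (picard hn f u) r)) :=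
    funext (stepEnergy_eq hn hF)
  rw [he]
  unfold radialInt
  apply intervalIntegral.continuous_parametric_intervalIntegral_of_continuous'
  have hS := continuous_picard hn (f := f)
  have hfc := f.continuous
  have hev : Continuous fun q : C(Icc (0:ℝ) 1, ℝ) × ℝ => ext01 q.1 q.2 := by
    unfold ext01 IccExtend
    simp only [Function.comp_apply]
    fun_prop
  have hev' : Continuous fun q : C(Icc (0:ℝ) 1, ℝ) × ℝ => ext01 (picard hn f q.1) q.2 :=
    hev.comp (f := fun q : C(Icc (0:ℝ) 1, ℝ) × ℝ => (picard hn f q.1, q.2)) (by fun_prop)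
  simp only [Function.uncurry_def]
  fun_prop

lemma stepEnergy_descent (hf : IsSubcritical n f F) (u : C(Icc (0:ℝ) 1, ℝ)) :
    stepEnergy hn f F (picard hn f u) + radialInt n (fun r =>
      (picardDeriv hn f (picard hn f u) r - picardDeriv hn f u r) ^ 2 +
      (ext01 (picard hn f (picard hn f u)) r - ext01 (picard hn f u) r) ^ 2) / 2 ≤
      stepEnergy hn f F u :=
  energy_descent f.continuous hf.continuous_primitive hf.add_mul_le
    (isNeumannSol_picard hn f u).toIsC1On (isNeumannSol_picard hn f (picard hn f u))

lemma stepEnergy_picard_le (hf : IsSubcritical n f F) (u : C(Icc (0:ℝ) 1, ℝ)) :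
    stepEnergy hn f F (picard hn f u) ≤ stepEnergy hn f F u := by
  have h1 := stepEnergy_descent hn hf u
  have h2 : 0 ≤ radialInt n (fun r =>
      (picardDeriv hn f (picard hn f u) r - picardDeriv hn f u r) ^ 2 +
      (ext01 (picard hn f (picard hn f u)) r - ext01 (picard hn f u) r) ^ 2) :=
    radialInt_nonneg fun r _ => by positivity
  linarith

lemma antitone_stepEnergy_iterate (hf : IsSubcritical n f F) (u : C(Icc (0:ℝ) 1, ℝ)) :
    Antitone fun m => stepEnergy hn f F ((picard hn f)^[m] u) :=
  antitone_nat_of_succ_le fun m => by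
    rw [Function.iterate_succ_apply']; exact stepEnergy_picard_le hn hf _

lemma picard_picard_eq_of_stepEnergy_eq (hf : IsSubcritical n f F) {u : C(Icc (0:ℝ) 1, ℝ)}
    (h : stepEnergy hn f F u ≤ stepEnergy hn f F (picard hn f u)) :
    picard hn f (picard hn f u) = picard hn f u := by
  have h1 := stepEnergy_descent hn hf u
  have c1 := (isNeumannSol_picard hn f u).cont
  have c2 := (isNeumannSol_picard hn f (picard hn f u)).cont
  have c3 := (isNeumannSol_picard hn f u).continuousOn
  have c4 := (isNeumannSol_picard hn f (picard hn f u)).continuousOn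
  have h2 := eq_zero_of_radialInt_le_zero (n := n) (g := fun r =>
      (picardDeriv hn f (picard hn f u) r - picardDeriv hn f u r) ^ 2 +
      (ext01 (picard hn f (picard hn f u)) r - ext01 (picard hn f u) r) ^ 2)
    (by fun_prop) (fun r _ => by positivity) (by linarith)
  ext r
  have h3 := h2 r r.2
  rw [ext01_coe, ext01_coe] at h3
  nlinarith [sq_nonneg (picardDeriv hn f (picard hn f u) r - picardDeriv hn f u r)]

/-- Arzelà–Ascoli for sequences with a uniform Lipschitz bound. -/
lemma exists_tendsto_subseq_of_lipschitz {u : ℕ → C(Icc (0:ℝ) 1, ℝ)} {M K : ℝ}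
    (hM : ∀ m r, |u m r| ≤ M) (hK : ∀ m r s, |u m r - u m s| ≤ K * dist r s) :
    ∃ (w : C(Icc (0:ℝ) 1, ℝ)) (φ : ℕ → ℕ), StrictMono φ ∧ Tendsto (u ∘ φ) atTop (𝓝 w) := by
  let e := ContinuousMap.isometryEquivBoundedOfCompact (Icc (0:ℝ) 1) ℝ
  have hc := BoundedContinuousFunction.arzela_ascoli (Icc (-M) M) isCompact_Icc
    (range fun m => e (u m))
    (by rintro _ r ⟨m, rfl⟩; exact abs_le.1 (hM m r))
    (by
      refine Metric.equicontinuous_of_continuity_modulus (fun t => K * t) ?_ _ ?_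
      · exact (continuous_const.mul continuous_id).tendsto' 0 0 (by simp)
      · rintro r s ⟨_, m, rfl⟩
        rw [Real.dist_eq]
        exact hK m r s)
  obtain ⟨g, -, φ, hφ, hg⟩ := hc.tendsto_subseq
    (fun m => subset_closure (mem_range_self m) : ∀ m, e (u m) ∈ _)
  refine ⟨e.symm g, φ, hφ, ?_⟩
  have := (e.symm.continuous.tendsto g).comp hg
  refine this.congr fun m => ?_
  simp

end Orbit

section Convergence

variable {n : ℕ} (hn : n ≠ 0) {f : C(ℝ, ℝ)} {F : ℝ → ℝ}

lemma picard_nonneg_on (hf : IsSubcritical n f F) (u : C(Icc (0:ℝ) 1, ℝ)) :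
    ∀ r ∈ Icc (0:ℝ) 1, 0 ≤ ext01 (picard hn f u) r := fun r hr => by
  rw [ext01_of_mem _ hr]
  exact picard_nonneg hn hf.nonneg u ⟨r, hr⟩

lemma h1_picard_le (hf : IsSubcritical n f F) {μ c E ℓ : ℝ} (hμ : 2 < μ)
    (hAR : ∀ s, 0 ≤ s → F s ≤ f s * s / μ + c) {u : C(Icc (0:ℝ) 1, ℝ)}
    (hE : stepEnergy hn f F u ≤ E) (hℓ : ℓ ≤ stepEnergy hn f F (picard hn f u)) :
    (μ - 2) / (4 * μ) * radialInt n (fun r =>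
      picardDeriv hn f u r ^ 2 + ext01 (picard hn f u) r ^ 2) ≤
      E + 1 / (μ * (μ - 2)) * (2 * (E - ℓ)) + c / (n + 1) := by
  have h1 := h1_le_of_energy_le hμ f.continuous hf.continuous_primitive hAR
    (isNeumannSol_picard hn f u).toIsC1On (picard_nonneg_on hn hf u)
    (isNeumannSol_picard hn f (picard hn f u))
  have h2 := stepEnergy_descent hn hf u
  have hk : 0 ≤ 1 / (μ * (μ - 2)) :=
    one_div_nonneg.2 (mul_nonneg (by linarith) (by linarith))
  have h3 := mul_le_mul_of_nonneg_left (show radialInt n (fun r =>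
      (picardDeriv hn f (picard hn f u) r - picardDeriv hn f u r) ^ 2 +
      (ext01 (picard hn f (picard hn f u)) r - ext01 (picard hn f u) r) ^ 2) ≤
      2 * (E - ℓ) by linarith) hk
  have h4 : energy n F (ext01 (picard hn f u)) (picardDeriv hn f u) ≤ E := hE
  linarith

lemma exists_h1_picard_le (hf : IsSubcritical n f F) {U : ℕ → C(Icc (0:ℝ) 1, ℝ)} {E ℓ : ℝ}
    (hU : ∀ m, U (m + 1) = picard hn f (U m)) (hE : ∀ m, stepEnergy hn f F (U m) ≤ E)
    (hℓ : ∀ m, ℓ ≤ stepEnergy hn f F (U m)) :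
    ∃ A, 0 ≤ A ∧ ∀ m, radialInt n (fun r =>
      picardDeriv hn f (U m) r ^ 2 + ext01 (picard hn f (U m)) r ^ 2) ≤ A := by
  obtain ⟨μ, c, hμ, hAR⟩ := hf.superquadratic
  have hk : 0 < (μ - 2) / (4 * μ) := div_pos (by linarith) (by linarith)
  have hA : ∀ m, radialInt n (fun r =>
      picardDeriv hn f (U m) r ^ 2 + ext01 (picard hn f (U m)) r ^ 2) ≤
      (E + 1 / (μ * (μ - 2)) * (2 * (E - ℓ)) + c / (n + 1)) / ((μ - 2) / (4 * μ)) := fun m => by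
    rw [le_div_iff₀ hk, mul_comm]
    exact h1_picard_le hn hf hμ hAR (hE m) (hU m ▸ hℓ (m + 1))
  refine ⟨_, le_trans (radialInt_nonneg fun r _ => ?_) (hA 0), hA⟩
  exact add_nonneg (sq_nonneg _) (sq_nonneg _)

lemma exists_picard_le (hf : IsSubcritical n f F) {U : ℕ → C(Icc (0:ℝ) 1, ℝ)} {E ℓ : ℝ}
    (hU : ∀ m, U (m + 1) = picard hn f (U m)) (hE : ∀ m, stepEnergy hn f F (U m) ≤ E)
    (hℓ : ∀ m, ℓ ≤ stepEnergy hn f F (U m)) :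
    ∃ M, ∀ m, ∀ r ∈ Icc (0:ℝ) 1, ext01 (picard hn f (U m)) r ≤ M := by
  obtain ⟨p, C, β, hp, hC, hβ, hβn, hσ, hgr⟩ := hf.growth
  obtain ⟨A, hA0, hA⟩ := exists_h1_picard_le hn hf hU hE hℓ
  have hβ' : (0:ℝ) < n + 2 + 1 / β := by positivity
  have hB : ∀ m, ∀ r ∈ Ioc (0:ℝ) 1, r ^ β * ext01 (picard hn f (U m)) r ^ 2 ≤
      (n + 2 + 1 / β) * A := fun m r hr =>
    ((isNeumannSol_picard hn f _).toIsC1On.rpow_mul_sq_le hβ hβn hr).trans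
      (mul_le_mul_of_nonneg_left (hA m) hβ'.le)
  obtain ⟨L, hL⟩ := exists_sup_le_half hn hp hC hβ hσ (mul_nonneg hβ'.le hA0)
  refine ⟨max ‖picard hn f (U 0)‖ (2 * L), fun m => ?_⟩
  induction m with
  | zero =>
    intro r hr
    rw [ext01_of_mem _ hr]
    have h1 := ContinuousMap.norm_coe_le_norm (picard hn f (U 0)) ⟨r, hr⟩
    rw [Real.norm_eq_abs] at h1
    exact ((le_abs_self _).trans h1).trans (le_max_left _ _)
  | succ m ih =>
    intro r hr
    have hB' := hB (m + 1)
    rw [hU m] at hB' ⊢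
    have h2 := le_max_right ‖picard hn f (U 0)‖ (2 * L)
    generalize max ‖picard hn f (U 0)‖ (2 * L) = M at ih h2 ⊢
    have := hL hgr (picard_nonneg_on hn hf (U m)) ih (hB m)
      (isNeumannSol_picard hn f (picard hn f (U m)))
      (picard_nonneg_on hn hf (picard hn f (U m))) hB' r hr
    linarith

lemma exists_picard_iterate_le (hf : IsSubcritical n f F) (u : C(Icc (0:ℝ) 1, ℝ)) {ℓ : ℝ}
    (hℓ : ∀ m, ℓ ≤ stepEnergy hn f F ((picard hn f)^[m] u)) :
    ∃ M, ∀ m, ∀ r ∈ Icc (0:ℝ) 1, ext01 (picard hn f ((picard hn f)^[m] u)) r ≤ M :=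
  exists_picard_le hn hf (fun _ => Function.iterate_succ_apply' _ _ _)
    (fun m => antitone_stepEnergy_iterate hn hf u (Nat.zero_le m)) hℓ

lemma abs_picard_sub_le (hf : IsSubcritical n f F) {u : C(Icc (0:ℝ) 1, ℝ)} {M : ℝ}
    (hM : ∀ r ∈ Icc (0:ℝ) 1, ext01 u r ≤ M)
    (hM' : ∀ r ∈ Icc (0:ℝ) 1, ext01 (picard hn f u) r ≤ M) (r s : Icc (0:ℝ) 1) :
    |picard hn f u r - picard hn f u s| ≤ (M + f M) * dist r s := by
  have hs := isNeumannSol_picard hn f u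
  have hd := hs.abs_deriv_le (K := M + f M) fun t ht => by
    have h1 := hf.mono (hM t ht)
    have h2 := hf.nonneg (ext01 u t)
    have h3 := picard_nonneg_on hn hf u t ht
    have h4 := hM' t ht
    rw [abs_le]
    constructor <;> linarith
  have := (convex_Icc (0:ℝ) 1).norm_image_sub_le_of_norm_hasDerivWithin_le hs.deriv hd s.2 r.2
  rw [ext01_coe, ext01_coe] at this
  exact this

/-- Bounded energy along the iteration forces subconvergence to a fixed point. -/
lemma exists_tendsto_fixedPoint (hf : IsSubcritical n f F) (u : C(Icc (0:ℝ) 1, ℝ)) {ℓ : ℝ}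
    (hℓ : ∀ m, ℓ ≤ stepEnergy hn f F ((picard hn f)^[m] u)) :
    ∃ (w : C(Icc (0:ℝ) 1, ℝ)) (φ : ℕ → ℕ), picard hn f w = w ∧
      Tendsto (fun k => (picard hn f)^[φ k] u) atTop (𝓝 w) := by
  obtain ⟨M, hM⟩ := exists_picard_iterate_le hn hf u hℓ
  obtain ⟨w, φ, hφ, hw⟩ := exists_tendsto_subseq_of_lipschitz (M := M) (K := M + f M)
    (u := fun m => (picard hn f)^[m + 2] u)
    (fun m r => by
      have h1 := hM (m + 1) r r.2
      rw [ext01_coe] at h1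
      have h2 : 0 ≤ picard hn f ((picard hn f)^[m + 1] u) r := picard_nonneg hn hf.nonneg _ r
      rw [Function.iterate_succ_apply', abs_of_nonneg h2]
      exact h1)
    (fun m r s => by
      have h2 := hM (m + 1)
      rw [Function.iterate_succ_apply'] at h2
      rw [Function.iterate_succ_apply', Function.iterate_succ_apply']
      exact abs_picard_sub_le hn hf (hM m) h2 r s)
  have hw' : Tendsto (fun k => (picard hn f)^[φ k + 3] u) atTop (𝓝 (picard hn f w)) := by
    refine (((continuous_picard hn).tendsto w).comp hw).congr fun k => ?_
    exact (Function.iterate_succ_apply' (picard hn f) (φ k + 2) u).symm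
  have hc := continuous_stepEnergy hn (f := f) hf.continuous_primitive
  have hlim := tendsto_atTop_ciInf (antitone_stepEnergy_iterate hn hf u)
    ⟨ℓ, by rintro _ ⟨m, rfl⟩; exact hℓ m⟩
  have t1 := (hc.tendsto w).comp hw
  have t2 := (hc.tendsto _).comp hw'
  have s1 := hlim.comp (tendsto_atTop_mono (fun k => Nat.le_add_right (φ k) 2) hφ.tendsto_atTop)
  have s2 := hlim.comp (tendsto_atTop_mono (fun k => Nat.le_add_right (φ k) 3) hφ.tendsto_atTop)
  have e1 := tendsto_nhds_unique t1 s1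
  have e2 := tendsto_nhds_unique t2 s2
  exact ⟨picard hn f w, fun k => φ k + 3,
    picard_picard_eq_of_stepEnergy_eq hn hf (e1.trans e2.symm).le, hw'⟩

end Convergence

section Selection

variable {n : ℕ} (hn : n ≠ 0) {f : C(ℝ, ℝ)} {F : ℝ → ℝ}

lemma isOpen_setOf_forall_lt (c : ℝ) : IsOpen {u : C(Icc (0:ℝ) 1, ℝ) | ∀ x, u x < c} := by
  have := ContinuousMap.isOpen_setOfPred_mapsTo (X := Icc (0:ℝ) 1) isCompact_univ (isOpen_Iio (a := c))
  simpa [MapsTo] using this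

lemma isOpen_setOf_forall_gt (c : ℝ) : IsOpen {u : C(Icc (0:ℝ) 1, ℝ) | ∀ x, c < u x} := by
  have := ContinuousMap.isOpen_setOfPred_mapsTo (X := Icc (0:ℝ) 1) isCompact_univ (isOpen_Ioi (a := c))
  simpa [MapsTo] using this

lemma iterate_picard_le_const (hf : Monotone f) {c : ℝ} (hc : f c = c)
    {u : C(Icc (0:ℝ) 1, ℝ)} {m k : ℕ} (hmk : m ≤ k)
    (h : (picard hn f)^[m] u ≤ .const _ c) : (picard hn f)^[k] u ≤ .const _ c := by
  induction k, hmk using Nat.le_induction with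
  | base => exact h
  | succ k _ ih =>
    rw [Function.iterate_succ_apply']
    exact (picard_mono hn hf ih).trans_eq (by rw [picard_const, hc])

lemma const_le_iterate_picard (hf : Monotone f) {c : ℝ} (hc : f c = c)
    {u : C(Icc (0:ℝ) 1, ℝ)} {m k : ℕ} (hmk : m ≤ k)
    (h : .const _ c ≤ (picard hn f)^[m] u) : .const _ c ≤ (picard hn f)^[k] u := by
  induction k, hmk using Nat.le_induction with
  | base => exact h
  | succ k _ ih =>
    rw [Function.iterate_succ_apply']
    exact le_trans (by rw [picard_const, hc]) (picard_mono hn hf ih)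

lemma stepEnergy_const (hf : IsSubcritical n f F) {c : ℝ} (hc : f c = c) :
    stepEnergy hn f F (.const _ c) = (c ^ 2 / 2 - F c) / (n + 1) := by
  rw [stepEnergy_eq hn hf.continuous_primitive, ← radialInt_const]
  refine radialInt_congr fun r hr => ?_
  rw [picard_const, hc, ext01_of_mem _ hr, ContinuousMap.const_apply, hc]
  ring

lemma neg_le_stepEnergy_of_le_const (hf : IsSubcritical n f F) {c : ℝ} (hc : f c = c)
    {u : C(Icc (0:ℝ) 1, ℝ)} (h : u ≤ .const _ c) : -F c / (n + 1) ≤ stepEnergy hn f F u := by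
  rw [stepEnergy_eq hn hf.continuous_primitive, ← radialInt_const]
  have c1 := hf.continuous_primitive
  have c2 := f.continuous
  have c3 := continuous_ext01 u
  have c4 := continuous_ext01 (picard hn f u)
  refine radialInt_mono (by fun_prop) (by fun_prop) fun r hr => ?_
  have h1 := picard_nonneg_on hn hf u r hr
  have h2 : ext01 (picard hn f u) r ≤ c := by
    rw [ext01_of_mem _ hr]
    have := picard_mono hn hf.mono h ⟨r, hr⟩
    rwa [picard_const, hc] at this
  have h3 := hf.primitive_mono h2
  have h4 := mul_nonneg (hf.nonneg (ext01 u r)) h1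
  linarith

lemma neg_le_stepEnergy_iterate (hf : IsSubcritical n f F) {c : ℝ} (hc : f c = c)
    {u : C(Icc (0:ℝ) 1, ℝ)} {m : ℕ} (h : ∀ x, (picard hn f)^[m] u x < c) (k : ℕ) :
    -F c / (n + 1) ≤ stepEnergy hn f F ((picard hn f)^[k] u) :=
  (neg_le_stepEnergy_of_le_const hn hf hc
    (iterate_picard_le_const hn hf.mono hc (le_max_right k m) fun x => (h x).le)).trans
    (antitone_stepEnergy_iterate hn hf u (le_max_left k m))

/-- On a path joining data below `c` to data above `c`, some orbit has energy bounded below and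
never leaves the level `c`. -/
lemma exists_threshold (hf : IsSubcritical n f F) {c : ℝ} (hc : f c = c)
    {γ : ℝ → C(Icc (0:ℝ) 1, ℝ)} (hγ : Continuous γ) {a b : ℝ} (hab : a ≤ b)
    (ha : ∀ x, γ a x < c) (hb : ∀ x, c < γ b x) :
    ∃ s ∈ Icc a b, (∀ m, ¬ ∀ x, (picard hn f)^[m] (γ s) x < c) ∧
      (∀ m, ¬ ∀ x, c < (picard hn f)^[m] (γ s) x) ∧
      ∀ m, -F c / (n + 1) ≤ stepEnergy hn f F ((picard hn f)^[m] (γ s)) := by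
  have hit : ∀ m, Continuous fun s => (picard hn f)^[m] (γ s) := fun m =>
    ((continuous_picard hn).iterate m).comp hγ
  let A : Set ℝ := {s | ∃ m, ∀ x, (picard hn f)^[m] (γ s) x < c}
  have hAo : IsOpen A := by
    have : A = ⋃ m, (fun s => (picard hn f)^[m] (γ s)) ⁻¹' {u | ∀ x, u x < c} := by
      ext s; simp [A]
    rw [this]
    exact isOpen_iUnion fun m => (isOpen_setOf_forall_lt c).preimage (hit m)
  have haA : a ∈ A := ⟨0, ha⟩
  have hexcl : ∀ s ∈ A, ∀ m, ¬ ∀ x, c < (picard hn f)^[m] (γ s) x := by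
    rintro s ⟨j, hj⟩ m hm
    have x0 : Icc (0:ℝ) 1 := ⟨0, by simp⟩
    rcases le_total j m with h | h
    · have := iterate_picard_le_const hn hf.mono hc h (fun x => (hj x).le) x0
      exact (hm x0).not_ge this
    · have := const_le_iterate_picard hn hf.mono hc h (fun x => (hm x).le) x0
      exact (hj x0).not_ge this
  have hbA : b ∉ A := fun h => hexcl b h 0 hb
  have hcp : IsCompact (Icc a b ∩ Aᶜ) := isCompact_Icc.inter_right hAo.isClosed_compl
  obtain ⟨s, ⟨hs, hsA⟩, hmin⟩ := hcp.exists_isLeast ⟨b, ⟨hab, le_rfl⟩, hbA⟩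
  have has : a < s := lt_of_le_of_ne hs.1 fun h => hsA (h ▸ haA)
  have hlt : ∀ t ∈ Ico a s, t ∈ A := fun t ht => by
    by_contra h
    exact ht.2.not_ge (hmin ⟨⟨ht.1, ht.2.le.trans hs.2⟩, h⟩)
  have hev : ∀ᶠ t in 𝓝[<] s, t ∈ A := by
    filter_upwards [Ico_mem_nhdsLT has] using hlt
  refine ⟨s, hs, fun m h => hsA ⟨m, h⟩, fun m h => ?_, fun m => ?_⟩
  · have h1 : ∀ᶠ t in 𝓝 s, ∀ x, c < (picard hn f)^[m] (γ t) x :=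
      ((isOpen_setOf_forall_gt c).preimage (hit m)).mem_nhds h
    obtain ⟨t, ht, ht'⟩ := (hev.and (h1.filter_mono nhdsWithin_le_nhds)).exists
    exact hexcl t ht m ht'
  · have h1 : Tendsto (fun t => stepEnergy hn f F ((picard hn f)^[m] (γ t))) (𝓝[<] s)
        (𝓝 (stepEnergy hn f F ((picard hn f)^[m] (γ s)))) :=
      (((continuous_stepEnergy hn hf.continuous_primitive).comp (hit m)).tendsto s).mono_left
        nhdsWithin_le_nhds
    exact ge_of_tendsto h1 (hev.mono fun t ⟨j, hj⟩ => neg_le_stepEnergy_iterate hn hf hc hj m)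

/-- A path of low energy crossing the level `c` yields a nonconstant fixed point. -/
lemma exists_nonconstant_fixedPoint (hf : IsSubcritical n f F) {c : ℝ} (hc : f c = c)
    {γ : ℝ → C(Icc (0:ℝ) 1, ℝ)} (hγ : Continuous γ) {a b : ℝ} (hab : a ≤ b)
    (ha : ∀ x, γ a x < c) (hb : ∀ x, c < γ b x)
    (hE : ∀ s ∈ Icc a b, stepEnergy hn f F (γ s) < (c ^ 2 / 2 - F c) / (n + 1))
    {K : Set C(Icc (0:ℝ) 1, ℝ)} (hK : IsClosed K) (hKS : MapsTo (picard hn f) K K)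
    (hγK : ∀ s ∈ Icc a b, γ s ∈ K) :
    ∃ w ∈ K, picard hn f w = w ∧ (∃ x, c ≤ w x) ∧ ∃ x y, w x ≠ w y := by
  obtain ⟨s, hs, hlt, hgt, hℓ⟩ := exists_threshold hn hf hc hγ hab ha hb
  obtain ⟨w, φ, hw, hφ⟩ := exists_tendsto_fixedPoint hn hf (γ s) hℓ
  have h1 : ∃ x, c ≤ w x := by
    by_contra! h
    obtain ⟨k, hk⟩ := (hφ.eventually ((isOpen_setOf_forall_lt c).mem_nhds h)).exists
    exact hlt _ hk
  have h2 : ∃ x, w x ≤ c := by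
    by_contra! h
    obtain ⟨k, hk⟩ := (hφ.eventually ((isOpen_setOf_forall_gt c).mem_nhds h)).exists
    exact hgt _ hk
  refine ⟨w, hK.mem_of_tendsto hφ (.of_forall fun k => hKS.iterate _ (hγK s hs)), hw, h1, ?_⟩
  by_contra! h
  have hwc : w = .const _ c := by
    obtain ⟨x, hx⟩ := h1
    obtain ⟨y, hy⟩ := h2
    ext z
    exact le_antisymm ((h z y).trans_le hy) (hx.trans_eq (h x z))
  have hc' := (continuous_stepEnergy hn (f := f) hf.continuous_primitive).tendsto w
  have h3 := le_of_tendsto (hc'.comp hφ) (.of_forall fun k =>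
    antitone_stepEnergy_iterate hn hf (γ s) (Nat.zero_le (φ k)))
  rw [hwc, stepEnergy_const hn hf hc] at h3
  exact (hE s hs).not_ge h3

end Selection

section Path

variable {n : ℕ} (hn : n ≠ 0) {f : C(ℝ, ℝ)} {F : ℝ → ℝ}

lemma IsSubcritical.exists_quadratic_lower_bound (hf : IsSubcritical n f F) {c d lam : ℝ}
    (hc : f c = c) (hd : HasDerivAt f d c) (hlam : lam < d) :
    ∃ δ > 0, ∀ y, |y| ≤ δ → F c + c * y + lam / 2 * y ^ 2 ≤ F (c + y) := by
  have h1 : ∀ᶠ x in 𝓝[≠] c, lam < slope f c x :=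
    hd.tendsto_slope.eventually_const_lt hlam
  rw [eventually_nhdsWithin_iff, Metric.eventually_nhds_iff] at h1
  obtain ⟨δ, hδ, h1⟩ := h1
  refine ⟨δ / 2, half_pos hδ, fun y hy => ?_⟩
  have hg : ∀ z, HasDerivAt (fun z => F z - c * (z - c) - lam / 2 * (z - c) ^ 2)
      (f z - c - lam * (z - c)) z := fun z => by
    have h2 := ((hf.hasDerivAt z).sub (((hasDerivAt_id z).sub_const c).const_mul c)).sub
      ((((hasDerivAt_id z).sub_const c).pow 2).const_mul (lam / 2))
    refine h2.congr_deriv ?_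
    simp only [id]; push_cast; ring
  have hslope : ∀ z, z ≠ c → |z - c| < δ → lam < (f z - c) / (z - c) := fun z hz hzδ => by
    have := h1 (y := z) (by rwa [Real.dist_eq]) hz
    rwa [slope_def_field, hc] at this
  have hcont : Continuous (fun z => F z - c * (z - c) - lam / 2 * (z - c) ^ 2) :=
    continuous_iff_continuousAt.2 fun z => (hg z).continuousAt
  rcases lt_trichotomy y 0 with h | rfl | h
  · rw [abs_of_neg h] at hy
    obtain ⟨ξ, hξ, he⟩ := exists_hasDerivAt_eq_slope _ _ (show c + y < c by linarith)
      hcont.continuousOn fun z _ => hg z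
    have h3 := hslope ξ hξ.2.ne (by rw [abs_lt]; constructor <;> linarith [hξ.1, hξ.2])
    rw [lt_div_iff_of_neg (by linarith [hξ.2])] at h3
    rw [eq_div_iff (by linarith)] at he
    have h4 := mul_nonneg_of_nonpos_of_nonpos (show f ξ - c - lam * (ξ - c) ≤ 0 by linarith) h.le
    nlinarith
  · simp
  · rw [abs_of_pos h] at hy
    obtain ⟨ξ, hξ, he⟩ := exists_hasDerivAt_eq_slope _ _ (show c < c + y by linarith)
      hcont.continuousOn fun z _ => hg z
    have h3 := hslope ξ hξ.1.ne' (by rw [abs_lt]; constructor <;> linarith [hξ.1, hξ.2])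
    rw [lt_div_iff₀ (by linarith [hξ.1])] at h3
    rw [eq_div_iff (by linarith)] at he
    have h4 := mul_nonneg (show 0 ≤ f ξ - c - lam * (ξ - c) by linarith) h.le
    nlinarith

lemma energy_add_lt {c lam lam' δ s t : ℝ} {ψ χ : ℝ → ℝ} (hF : Continuous F)
    (hψ : IsC1On ψ χ) (hmean : radialInt n ψ = 0) (hpos : 0 < radialInt n fun r => ψ r ^ 2)
    (hray : radialInt n (fun r => χ r ^ 2) ≤ (lam - 1) * radialInt n fun r => ψ r ^ 2)
    (hlam : 1 < lam) (hlam' : lam < lam')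
    (hFc : ∀ y, |y| ≤ δ → F c + c * y + lam' / 2 * y ^ 2 ≤ F (c + y)) (ht : 0 < t)
    (hst : ∀ r ∈ Icc (0:ℝ) 1, |s - c + t * ψ r| ≤ δ) :
    energy n F (fun r => s + t * ψ r) (fun r => t * χ r) < (c ^ 2 / 2 - F c) / (n + 1) := by
  have c1 := hψ.continuousOn
  have c2 := hψ.cont
  have e1 : radialInt n (fun r => (t ^ 2 / 2 * χ r ^ 2 + (1 - lam') * t ^ 2 / 2 * ψ r ^ 2) +
      ((1 - lam') * (s - c) * t * ψ r +
        (c ^ 2 / 2 - F c + (1 - lam') / 2 * (s - c) ^ 2))) =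
      (t ^ 2 / 2 * radialInt n (fun r => χ r ^ 2) +
        (1 - lam') * t ^ 2 / 2 * radialInt n (fun r => ψ r ^ 2)) +
      ((1 - lam') * (s - c) * t * radialInt n ψ +
        (c ^ 2 / 2 - F c + (1 - lam') / 2 * (s - c) ^ 2) / (n + 1)) := by
    rw [radialInt_add (by fun_prop) (by fun_prop), radialInt_add (by fun_prop) (by fun_prop),
      radialInt_add (by fun_prop) (by fun_prop), radialInt_const_mul, radialInt_const_mul,
      radialInt_const_mul, radialInt_const]
  have e2 : energy n F (fun r => s + t * ψ r) (fun r => t * χ r) ≤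
      radialInt n (fun r => (t ^ 2 / 2 * χ r ^ 2 + (1 - lam') * t ^ 2 / 2 * ψ r ^ 2) +
      ((1 - lam') * (s - c) * t * ψ r +
        (c ^ 2 / 2 - F c + (1 - lam') / 2 * (s - c) ^ 2))) := by
    refine radialInt_mono (by fun_prop) (by fun_prop) fun r hr => ?_
    have := hFc _ (hst r hr)
    rw [show c + (s - c + t * ψ r) = s + t * ψ r by ring] at this
    nlinarith
  rw [e1, hmean] at e2
  have h1 : (t ^ 2 / 2 * radialInt n (fun r => χ r ^ 2) +
        (1 - lam') * t ^ 2 / 2 * radialInt n (fun r => ψ r ^ 2)) < 0 := by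
    have h2 := mul_le_mul_of_nonneg_left hray (show 0 ≤ t ^ 2 / 2 by positivity)
    have h3 := mul_pos (mul_pos (show 0 < t ^ 2 / 2 by positivity) (sub_pos.2 hlam')) hpos
    nlinarith
  have h2 : (c ^ 2 / 2 - F c + (1 - lam') / 2 * (s - c) ^ 2) / (n + 1) ≤
      (c ^ 2 / 2 - F c) / (n + 1) := by
    have h3 : (1 - lam') / 2 * (s - c) ^ 2 ≤ 0 :=
      mul_nonpos_of_nonpos_of_nonneg (by linarith) (sq_nonneg _)
    gcongr
    linarith
  linarith

lemma stepEnergy_le_energy (hf : IsSubcritical n f F) {u : C(Icc (0:ℝ) 1, ℝ)} {z w : ℝ → ℝ}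
    (hz : IsC1On z w) (hu : ∀ x : Icc (0:ℝ) 1, u x = z x) :
    stepEnergy hn f F u ≤ energy n F z w := by
  have he : ∀ r ∈ Icc (0:ℝ) 1, ext01 u r = z r := fun r hr => by
    rw [ext01_of_mem _ hr]; exact hu ⟨r, hr⟩
  have h1 : IsC1On (ext01 u) w :=
    { hz with deriv := fun r hr => (hz.deriv r hr).congr he (he r hr) }
  have h2 := energy_descent f.continuous hf.continuous_primitive hf.add_mul_le h1
    (isNeumannSol_picard hn f u)
  have h3 : energy n F (ext01 u) w = energy n F z w :=
    radialInt_congr fun r hr => by simp only [he r hr]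
  have h4 : 0 ≤ radialInt n (fun r => (picardDeriv hn f u r - w r) ^ 2 +
      (ext01 (picard hn f u) r - ext01 u r) ^ 2) :=
    radialInt_nonneg fun r _ => add_nonneg (sq_nonneg _) (sq_nonneg _)
  unfold stepEnergy
  linarith

theorem exists_nonconstant_fixedPoint_of_testFunction (hf : IsSubcritical n f F)
    {c d lam : ℝ} (hc : f c = c) (hd : HasDerivAt f d c) (hlam : 1 < lam) (hlamd : lam < d)
    {ψ : C(Icc (0:ℝ) 1, ℝ)} {z χ : ℝ → ℝ} (hψ : ∀ x : Icc (0:ℝ) 1, ψ x = z x)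
    (hz : IsC1On z χ) (hmean : radialInt n z = 0) (hpos : 0 < radialInt n fun r => z r ^ 2)
    (hray : radialInt n (fun r => χ r ^ 2) ≤ (lam - 1) * radialInt n fun r => z r ^ 2)
    {K : Set C(Icc (0:ℝ) 1, ℝ)} (hK : IsClosed K) (hKS : MapsTo (picard hn f) K K)
    (hψK : ∀ s t : ℝ, 0 < t → .const _ s + t • ψ ∈ K) :
    ∃ w ∈ K, picard hn f w = w ∧ (∃ x, c ≤ w x) ∧ ∃ x y, w x ≠ w y := by
  obtain ⟨lam', h1, h2⟩ := exists_between hlamd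
  obtain ⟨δ, hδ, hFc⟩ := hf.exists_quadratic_lower_bound hc hd h2
  obtain ⟨t, ht, htψ⟩ : ∃ t > 0, ∀ x, |t * ψ x| < δ / 2 := by
    have hB : 0 < ‖ψ‖ + 1 := by positivity
    refine ⟨δ / 2 / (‖ψ‖ + 1), by positivity, fun x => ?_⟩
    have h3 := ContinuousMap.norm_coe_le_norm ψ x
    rw [Real.norm_eq_abs] at h3
    rw [abs_mul, abs_of_pos (by positivity), div_mul_eq_mul_div, div_lt_iff₀ hB]
    nlinarith
  refine exists_nonconstant_fixedPoint hn hf hc (γ := fun s => .const _ s + t • ψ)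
    (by fun_prop) (show c - δ / 2 ≤ c + δ / 2 by linarith) (fun x => ?_) (fun x => ?_)
    (fun s hs => ?_) hK hKS fun s _ => hψK s t ht
  · have := (abs_lt.1 (htψ x)).2
    simp only [ContinuousMap.add_apply, ContinuousMap.const_apply, ContinuousMap.smul_apply,
      smul_eq_mul]
    linarith
  · have := (abs_lt.1 (htψ x)).1
    simp only [ContinuousMap.add_apply, ContinuousMap.const_apply, ContinuousMap.smul_apply,
      smul_eq_mul]
    linarith
  · have hs1 : IsC1On (fun r => s + t * z r) fun r => t * χ r :=
      ⟨hz.cont.const_smul t, fun r hr => ((hz.deriv r hr).const_mul t).const_add s⟩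
    refine (stepEnergy_le_energy hn hf hs1 fun x => ?_).trans_lt
      (energy_add_lt hf.continuous_primitive hz hmean hpos hray hlam h1 hFc ht fun r hr => ?_)
    · simp [hψ]
    · have h3 := htψ ⟨r, hr⟩
      rw [hψ, abs_lt] at h3
      rw [abs_le]
      constructor <;> linarith [hs.1, hs.2]

end Path

section Positivity

variable {n : ℕ} {h u v : ℝ → ℝ}

lemma IsC1On.monotoneOn_exp_mul (hu : IsC1On u v) {L a : ℝ} (ha : 0 ≤ a)
    (hL : ∀ r ∈ Ioo a 1, -(L * u r) ≤ v r) :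
    MonotoneOn (fun r => Real.exp (L * r) * u r) (Icc a 1) := by
  have hc := hu.continuousOn.mono (Icc_subset_Icc_left ha)
  refine monotoneOn_of_hasDerivWithinAt_nonneg (convex_Icc a 1) (by fun_prop)
    (f' := fun r => Real.exp (L * r) * (L * u r + v r)) (fun r hr => ?_) fun r hr => ?_
  · rw [interior_Icc] at hr
    have h1 := hu.hasDerivAt ⟨ha.trans_lt hr.1, hr.2⟩
    have h2 := (((hasDerivAt_id r).const_mul L).exp.mul h1).hasDerivWithinAt
      (s := interior (Icc a 1))
    refine h2.congr_deriv ?_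
    simp only [id]; ring
  · rw [interior_Icc] at hr
    have := hL r hr
    exact mul_nonneg (Real.exp_pos _).le (by linarith)

lemma IsNeumannSol.pos_of_antitoneOn (hs : IsNeumannSol n h u v) (hh : ∀ r ∈ Icc (0:ℝ) 1, 0 ≤ h r)
    (hu : ∀ r ∈ Icc (0:ℝ) 1, 0 ≤ u r) (hmono : AntitoneOn u (Icc 0 1))
    (hpos : ∃ r ∈ Icc (0:ℝ) 1, 0 < u r) : ∀ r ∈ Icc (0:ℝ) 1, 0 < u r := by
  have h0 : 0 < u 0 := by
    obtain ⟨r, hr, hr'⟩ := hpos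
    exact hr'.trans_le (hmono ⟨le_rfl, zero_le_one⟩ hr hr.1)
  obtain ⟨a, ha0, ha1, hau⟩ : ∃ a, 0 < a ∧ a < 1 ∧ 0 < u a := by
    have h1 : ∀ᶠ r in 𝓝[Icc 0 1] (0:ℝ), 0 < u r :=
      (hs.continuousOn 0 ⟨le_rfl, zero_le_one⟩).eventually_const_lt h0
    have h2 : ∀ᶠ r in 𝓝[>] (0:ℝ), 0 < u r := by
      rw [← nhdsWithin_Ioo_eq_nhdsGT (zero_lt_one' ℝ)]
      exact h1.filter_mono (nhdsWithin_mono _ Ioo_subset_Icc_self)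
    obtain ⟨a, ha, ha'⟩ := (h2.and (Ioo_mem_nhdsGT (zero_lt_one' ℝ))).exists
    exact ⟨a, ha'.1, ha'.2, ha⟩
  have key : ∀ r ∈ Ioo a 1, -(r ^ n * v r) ≤ u r := fun r hr => by
    have hr0 : 0 < r := ha0.trans hr.1
    have hsub : Icc r 1 ⊆ Icc 0 1 := Icc_subset_Icc_left hr0.le
    have hq := hs.flux_continuousOn.mono hsub
    have hur := hu r ⟨hr0.le, hr.2.le⟩
    have hanti : AntitoneOn (fun x => x ^ n * v x - x * u r) (Icc r 1) := by
      refine antitoneOn_of_hasDerivWithinAt_nonpos (convex_Icc r 1) (by fun_prop)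
        (f' := fun x => x ^ n * (u x - h x) - 1 * u r) (fun x hx => ?_) fun x hx => ?_
      · rw [interior_Icc] at hx
        exact ((hs.flux x ⟨hr0.trans hx.1, hx.2⟩).sub
          ((hasDerivAt_id x).mul_const (u r))).hasDerivWithinAt
      · rw [interior_Icc] at hx
        have hx' : x ∈ Icc (0:ℝ) 1 := hsub ⟨hx.1.le, hx.2.le⟩
        have h1 := hmono ⟨hr0.le, hr.2.le⟩ hx' hx.1.le
        have h2 := hh x hx'
        have h3 : x ^ n * (u x - h x) ≤ x ^ n * u r :=
          mul_le_mul_of_nonneg_left (by linarith) (pow_nonneg hx'.1 n)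
        have h4 := mul_le_mul_of_nonneg_right (pow_le_one₀ hx'.1 hx'.2 (n := n)) hur
        linarith
    have h1 := hanti ⟨le_rfl, hr.2.le⟩ ⟨hr.2.le, le_rfl⟩ hr.2.le
    simp only [hs.right, mul_zero, zero_sub, one_mul] at h1
    nlinarith [mul_nonneg hr0.le hur]
  have hpow : 0 < a ^ n := pow_pos ha0 n
  have hexp := hs.monotoneOn_exp_mul (L := (a ^ n)⁻¹) ha0.le fun r hr => by
    have h1 := key r hr
    have h2 := hu r ⟨(ha0.trans hr.1).le, hr.2.le⟩
    rw [neg_le, inv_mul_eq_div, le_div_iff₀ hpow]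
    rcases le_total 0 (v r) with h3 | h3
    · nlinarith
    · have h4 : a ^ n ≤ r ^ n := pow_le_pow_left₀ ha0.le hr.1.le n
      nlinarith
  have h1 := hexp ⟨le_rfl, ha1.le⟩ ⟨ha1.le, le_rfl⟩ ha1.le
  have h2 : 0 < u 1 := by
    have h3 : 0 < Real.exp ((a ^ n)⁻¹ * a) * u a := mul_pos (Real.exp_pos _) hau
    exact pos_of_mul_pos_right (h3.trans_le h1) (Real.exp_pos _).le
  exact fun r hr => h2.trans_le (hmono hr ⟨zero_le_one, le_rfl⟩ hr.2)

lemma IsNeumannSol.pos_of_monotoneOn (hs : IsNeumannSol n h u v)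
    (hh : ∀ r ∈ Icc (0:ℝ) 1, 0 ≤ h r)
    (hu : ∀ r ∈ Icc (0:ℝ) 1, 0 ≤ u r) (hmono : MonotoneOn u (Icc 0 1))
    (hpos : ∃ r ∈ Icc (0:ℝ) 1, 0 < u r) : ∀ r ∈ Icc (0:ℝ) 1, 0 < u r := by
  have key : ∀ r ∈ Ioo (0:ℝ) 1, v r ≤ u r := fun r hr => by
    have hsub : Icc 0 r ⊆ Icc 0 1 := Icc_subset_Icc_right hr.2.le
    have hq := hs.flux_continuousOn.mono hsub
    have hur := hu r ⟨hr.1.le, hr.2.le⟩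
    have hanti : AntitoneOn (fun x => x ^ n * v x - x ^ (n + 1) / (n + 1) * u r) (Icc 0 r) := by
      refine antitoneOn_of_hasDerivWithinAt_nonpos (convex_Icc 0 r) (by fun_prop)
        (f' := fun x => x ^ n * (u x - h x) - x ^ n * u r) (fun x hx => ?_) fun x hx => ?_
      · rw [interior_Icc] at hx
        have h1 := ((hs.flux x ⟨hx.1, hx.2.trans hr.2⟩).sub
          (((hasDerivAt_pow (n + 1) x).div_const (n + 1)).mul_const (u r))).hasDerivWithinAt
          (s := interior (Icc 0 r))
        refine h1.congr_deriv ?_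
        have : (n:ℝ) + 1 ≠ 0 := by positivity
        push_cast
        field_simp
      · rw [interior_Icc] at hx
        have hx' : x ∈ Icc (0:ℝ) 1 := hsub ⟨hx.1.le, hx.2.le⟩
        have h1 := hmono hx' ⟨hr.1.le, hr.2.le⟩ hx.2.le
        have h2 := hh x hx'
        have h3 : x ^ n * (u x - h x) ≤ x ^ n * u r :=
          mul_le_mul_of_nonneg_left (by linarith) (pow_nonneg hx'.1 n)
        linarith
    have h1 := hanti ⟨le_rfl, hr.1.le⟩ ⟨hr.1.le, le_rfl⟩ hr.1.le
    simp only [hs.left, mul_zero, zero_pow (Nat.succ_ne_zero n), zero_div, zero_mul,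
      sub_zero] at h1
    have hp : 0 < r ^ n := pow_pos hr.1 n
    have h2 : r ^ (n + 1) / (n + 1) * u r ≤ r ^ n * u r := by
      refine mul_le_mul_of_nonneg_right ?_ hur
      rw [div_le_iff₀ (by positivity), pow_succ]
      refine mul_le_mul_of_nonneg_left ?_ hp.le
      have : (0:ℝ) ≤ n := n.cast_nonneg
      linarith [hr.2]
    exact le_of_mul_le_mul_left (by linarith) hp
  have hexp := (IsC1On.const 0).sub hs.toIsC1On |>.monotoneOn_exp_mul (L := -1) le_rfl
    fun r hr => by
      have := key r hr
      linarith
  have h0 : 0 < u 0 := by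
    obtain ⟨r, hr, hr'⟩ := hpos
    have h1 := hexp ⟨le_rfl, zero_le_one⟩ hr hr.1
    have h2 := mul_pos (Real.exp_pos (-1 * r)) hr'
    simp only [mul_zero, Real.exp_zero] at h1
    linarith
  exact fun r hr => h0.trans_le (hmono ⟨le_rfl, zero_le_one⟩ hr hr.1)

end Positivity

section Statement

variable {n : ℕ}

lemma IsRadialEigenvalue.exists_isNeumannSol {lam : ℝ} (h : IsRadialEigenvalue (n + 1) lam) :
    ∃ u v : ℝ → ℝ, IsNeumannSol n (fun r => lam * u r) u v ∧ ∃ r ∈ Icc (0:ℝ) 1, u r ≠ 0 := by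
  obtain ⟨u, v, w, hu, hv, hw, h0, h1, hne, heq⟩ := h
  refine ⟨u, v, ⟨⟨hv, hu⟩, ?_, fun r hr => ?_, h0, h1⟩, hne⟩
  · exact (IsC1On.continuousOn ⟨hv, hu⟩).const_smul lam
  · refine ((hasDerivAt_pow n r).mul (hw r hr)).congr_deriv ?_
    have h2 := heq r hr
    have hr0 : r ≠ 0 := hr.1.ne'
    push_cast at h2
    have h3 : w r = u r - lam * u r - n / r * v r := by linear_combination -h2
    rw [h3]
    rcases Nat.eq_zero_or_pos n with rfl | hn
    · simp
    · obtain ⟨m, rfl⟩ := Nat.exists_eq_succ_of_ne_zero hn.ne'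
      simp only [Nat.succ_eq_add_one, Nat.add_sub_cancel, pow_succ]
      field_simp
      ring

lemma IsNeumannSol.exists_second_deriv {h u v : ℝ → ℝ} (hs : IsNeumannSol n h u v) :
    ∃ w : ℝ → ℝ, (∀ r ∈ Ioo (0:ℝ) 1, HasDerivAt v (w r) r) ∧
      ∀ r ∈ Ioo (0:ℝ) 1, -w r - (((n + 1 : ℕ) : ℝ) - 1) / r * v r + u r = h r := by
  refine ⟨fun r => u r - h r - n / r * v r, fun r hr => ?_, fun r hr => ?_⟩
  · have hr0 : r ≠ 0 := hr.1.ne'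
    have h1 := (hs.flux r hr).div (hasDerivAt_pow n r) (pow_ne_zero n hr0)
    have h2 : v =ᶠ[𝓝 r] (fun x => x ^ n * v x) / fun x => x ^ n := by
      filter_upwards [isOpen_ne.mem_nhds hr0] with x hx
      rw [Pi.div_apply, mul_div_cancel_left₀ _ (pow_ne_zero n hx)]
    refine (h1.congr_of_eventuallyEq h2).congr_deriv ?_
    rcases Nat.eq_zero_or_pos n with rfl | hn
    · simp
    · obtain ⟨m, rfl⟩ := Nat.exists_eq_succ_of_ne_zero hn.ne'
      simp only [Nat.succ_eq_add_one, Nat.add_sub_cancel, pow_succ]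
      field_simp
  · push_cast; ring

/-- Extension of a function on the half line by its value at `0`. -/
noncomputable def halfLineExtend (f : ℝ → ℝ) (hf : ContinuousOn f (Ici 0)) : C(ℝ, ℝ) where
  toFun s := f (max s 0)
  continuous_toFun := hf.comp_continuous (by fun_prop) fun s => le_max_right s 0

lemma halfLineExtend_of_nonneg {f : ℝ → ℝ} (hf : ContinuousOn f (Ici 0)) {s : ℝ} (hs : 0 ≤ s) :
    halfLineExtend f hf s = f s := by
  simp [halfLineExtend, hs]

lemma exists_decay_exponent (hn : n ≠ 0) {p : ℝ} (hp2 : 2 < p)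
    (hp : 3 ≤ n + 1 → p < 2 * (n + 1 : ℕ) / (((n + 1 : ℕ) : ℝ) - 2)) :
    ∃ β : ℝ, 0 < β ∧ (n:ℝ) ≤ β + 1 ∧ β * (p - 2) < 4 := by
  rcases Nat.lt_or_ge n 2 with h | h
  · have h1 : n = 1 := by omega
    subst h1
    have hp' : 0 < p - 2 := by linarith
    refine ⟨2 / (p - 2), by positivity, ?_, ?_⟩
    · have : 0 < 2 / (p - 2) := by positivity
      push_cast; linarith
    · rw [div_mul_cancel₀ _ hp'.ne']; norm_num
  · have h1 := hp (by omega)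
    have h2 : (2:ℝ) ≤ n := by exact_mod_cast h
    push_cast at h1
    rw [lt_div_iff₀ (by linarith)] at h1
    exact ⟨n - 1, by linarith, by linarith, by nlinarith⟩

lemma isSubcritical_halfLineExtend (hn : n ≠ 0) {p : ℝ} (hp2 : 2 < p)
    (hp : 3 ≤ n + 1 → p < 2 * (n + 1 : ℕ) / (((n + 1 : ℕ) : ℝ) - 2)) {f : ℝ → ℝ}
    (hfc : ContinuousOn f (Ici 0)) (hf_mono : MonotoneOn f (Ici 0)) (hf0 : f 0 = 0)
    {C : ℝ} (hC : 0 < C) (hgr : ∀ s : ℝ, 0 ≤ s → |f s| ≤ C * s ^ (p - 1))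
    {R μ : ℝ} (hR : 0 < R) (hμ : 2 < μ)
    (hAR : ∀ s : ℝ, R ≤ s → μ * ∫ t in (0:ℝ)..s, f t ≤ f s * s) :
    IsSubcritical n (halfLineExtend f hfc)
      (fun s => ∫ t in (0:ℝ)..s, halfLineExtend f hfc t) := by
  have hmono : Monotone (halfLineExtend f hfc) := fun a b hab =>
    hf_mono (mem_Ici.2 (le_max_right a 0)) (mem_Ici.2 (le_max_right b 0)) (max_le_max_right 0 hab)
  have hz : ∀ s ≤ 0, halfLineExtend f hfc s = 0 := fun s hs => by
    simp [halfLineExtend, hs, hf0]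
  have hnn : ∀ s, 0 ≤ halfLineExtend f hfc s := fun s => by
    rcases le_total s 0 with h | h
    · exact (hz s h).ge
    · exact (hz 0 le_rfl).ge.trans (hmono h)
  have hint : ∀ a b, IntervalIntegrable (halfLineExtend f hfc) MeasureTheory.volume a b :=
    fun a b => (halfLineExtend f hfc).continuous.intervalIntegrable a b
  have hF0 : 0 ≤ ∫ t in (0:ℝ)..R, halfLineExtend f hfc t :=
    intervalIntegral.integral_nonneg hR.le fun t _ => hnn t
  refine ⟨hmono, hz, fun s => ?_, by simp, ?_, ?_⟩
  · exact intervalIntegral.integral_hasDerivAt_right (hint 0 s)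
      ((halfLineExtend f hfc).continuous.stronglyMeasurableAtFilter _ _)
      (halfLineExtend f hfc).continuous.continuousAt
  · obtain ⟨β, h1, h2, h3⟩ := exists_decay_exponent hn hp2 hp
    refine ⟨p, C, β, hp2, hC, h1, h2, h3, fun s hs => ?_⟩
    rw [halfLineExtend_of_nonneg hfc hs]
    exact (le_abs_self _).trans (hgr s hs)
  · refine ⟨μ, ∫ t in (0:ℝ)..R, halfLineExtend f hfc t, hμ, fun s hs => ?_⟩
    have hμ0 : 0 < μ := by linarith
    rcases le_total R s with h | h
    · have h1 := hAR s h
      have h2 : ∫ t in (0:ℝ)..s, f t = ∫ t in (0:ℝ)..s, halfLineExtend f hfc t := by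
        refine intervalIntegral.integral_congr fun t ht => ?_
        rw [uIcc_of_le hs] at ht
        exact (halfLineExtend_of_nonneg hfc ht.1).symm
      rw [h2, ← halfLineExtend_of_nonneg hfc hs] at h1
      have h3 : ∫ t in (0:ℝ)..s, halfLineExtend f hfc t ≤ halfLineExtend f hfc s * s / μ := by
        rw [le_div_iff₀ hμ0]; linarith
      exact h3.trans (le_add_of_nonneg_right hF0)
    · have h1 : ∫ t in (0:ℝ)..s, halfLineExtend f hfc t ≤
          ∫ t in (0:ℝ)..R, halfLineExtend f hfc t :=
        intervalIntegral.integral_mono_interval le_rfl hs h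
          (.of_forall hnn) (hint 0 R)
      have h2 : 0 ≤ halfLineExtend f hfc s * s / μ := by
        have := mul_nonneg (hnn s) hs
        positivity
      exact h1.trans (le_add_of_nonneg_left h2)

lemma hasDerivAt_halfLineExtend {f : ℝ → ℝ} (hf : ContDiffOn ℝ 1 f (Ici 0)) {c : ℝ} (hc : 0 < c) :
    HasDerivAt (halfLineExtend f hf.continuousOn) (derivWithin f (Ici 0) c) c := by
  have h1 := ((hf.differentiableOn one_ne_zero) c hc.le).hasDerivWithinAt.hasDerivAt
    (Ici_mem_nhds hc)
  refine h1.congr_of_eventuallyEq ?_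
  filter_upwards [Ioi_mem_nhds hc] with s hs
  exact halfLineExtend_of_nonneg hf.continuousOn (le_of_lt hs)

lemma exists_solution_of_fixedPoint (hn : n ≠ 0) {f : ℝ → ℝ} (hf : ContinuousOn f (Ici 0))
    {w : C(Icc (0:ℝ) 1, ℝ)} (hw : picard hn (halfLineExtend f hf) w = w)
    (hpos : ∀ r ∈ Icc (0:ℝ) 1, 0 < ext01 w r) (hne : ∃ x y, w x ≠ w y)
    {Q : (ℝ → ℝ) → Prop} (hQ : Q (ext01 w)) :
    ∃ u u' u'' : ℝ → ℝ,
      (∀ r ∈ Icc (0:ℝ) 1, HasDerivWithinAt u (u' r) (Icc 0 1) r) ∧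
      ContinuousOn u' (Icc 0 1) ∧
      (∀ r ∈ Ioo (0:ℝ) 1, HasDerivAt u' (u'' r) r) ∧
      u' 0 = 0 ∧ u' 1 = 0 ∧
      (∀ r ∈ Icc (0:ℝ) 1, 0 < u r) ∧
      Q u ∧
      (∃ r ∈ Icc (0:ℝ) 1, ∃ s ∈ Icc (0:ℝ) 1, u r ≠ u s) ∧
      (∀ r ∈ Ioo (0:ℝ) 1,
        -u'' r - (((n + 1 : ℕ) : ℝ) - 1) / r * u' r + u r = f (u r)) := by
  have hs := isNeumannSol_picard hn (halfLineExtend f hf) w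
  rw [hw] at hs
  obtain ⟨u'', h1, h2⟩ := hs.exists_second_deriv
  refine ⟨ext01 w, _, u'', hs.deriv, hs.cont, h1, hs.left, hs.right, hpos, hQ, ?_, fun r hr => ?_⟩
  · obtain ⟨x, y, hxy⟩ := hne
    exact ⟨x, x.2, y, y.2, by rwa [ext01_coe, ext01_coe]⟩
  · rw [h2 r hr, halfLineExtend_of_nonneg hf (hpos r (Ioo_subset_Icc_self hr)).le]

lemma isClosed_setOf_monotone : IsClosed {u : C(Icc (0:ℝ) 1, ℝ) | Monotone u} := by
  simp only [Monotone, ofPred_forall]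
  exact isClosed_iInter fun x => isClosed_iInter fun y => isClosed_iInter fun _ =>
    isClosed_le (continuous_eval_const x) (continuous_eval_const y)

lemma isClosed_setOf_antitone : IsClosed {u : C(Icc (0:ℝ) 1, ℝ) | Antitone u} := by
  simp only [Antitone, ofPred_forall]
  exact isClosed_iInter fun x => isClosed_iInter fun y => isClosed_iInter fun _ =>
    isClosed_le (continuous_eval_const y) (continuous_eval_const x)

end Statement

end

/-- For `a ≡ 1`, a subcritical nonlinearity satisfying the Ambrosetti–Rabinowitz
condition and the spectral condition (f4) yields both a nonconstant nondecreasing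
and a nonconstant nonincreasing positive radial solution of `-Δu + u = f(u)` with
Neumann boundary conditions. -/
theorem stmt_17 (N : ℕ) (hN : 2 ≤ N) (p : ℝ) (hp2 : 2 < p)
    (hpcrit : 3 ≤ N → p < 2 * N / ((N : ℝ) - 2))
    (f : ℝ → ℝ)
    (hf_diff : ContDiffOn ℝ 1 f (Ici 0))
    (hf_mono : MonotoneOn f (Ici 0))
    (hf0 : f 0 = 0)
    (hf'0 : derivWithin f (Ici 0) 0 = 0)
    (C : ℝ) (hC : 0 < C)
    (hf_growth : ∀ s : ℝ, 0 ≤ s → |f s| ≤ C * s ^ (p - 1))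
    (R0 μ : ℝ) (hR0 : 0 < R0) (hμ : 2 < μ)
    (hAR : ∀ s : ℝ, R0 ≤ s → μ * ∫ t in (0:ℝ)..s, f t ≤ f s * s)
    (lam2 : ℝ) (hlam2_gt : 1 < lam2)
    (hlam2_eig : IsRadialEigenvalue N lam2)
    (hlam2_min : ∀ lam ∈ Ioo (1:ℝ) lam2, ¬ IsRadialEigenvalue N lam)
    (u0 : ℝ) (hu0 : 0 < u0) (hfu0 : f u0 = u0)
    (hf'u0 : lam2 < derivWithin f (Ici 0) u0) :
    (∃ u u' u'' : ℝ → ℝ,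
      (∀ r ∈ Icc (0:ℝ) 1, HasDerivWithinAt u (u' r) (Icc 0 1) r) ∧
      ContinuousOn u' (Icc 0 1) ∧
      (∀ r ∈ Ioo (0:ℝ) 1, HasDerivAt u' (u'' r) r) ∧
      u' 0 = 0 ∧ u' 1 = 0 ∧
      (∀ r ∈ Icc (0:ℝ) 1, 0 < u r) ∧
      MonotoneOn u (Icc 0 1) ∧
      (∃ r ∈ Icc (0:ℝ) 1, ∃ s ∈ Icc (0:ℝ) 1, u r ≠ u s) ∧
      (∀ r ∈ Ioo (0:ℝ) 1,
        -u'' r - ((N : ℝ) - 1) / r * u' r + u r = f (u r))) ∧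
    (∃ u u' u'' : ℝ → ℝ,
      (∀ r ∈ Icc (0:ℝ) 1, HasDerivWithinAt u (u' r) (Icc 0 1) r) ∧
      ContinuousOn u' (Icc 0 1) ∧
      (∀ r ∈ Ioo (0:ℝ) 1, HasDerivAt u' (u'' r) r) ∧
      u' 0 = 0 ∧ u' 1 = 0 ∧
      (∀ r ∈ Icc (0:ℝ) 1, 0 < u r) ∧
      AntitoneOn u (Icc 0 1) ∧
      (∃ r ∈ Icc (0:ℝ) 1, ∃ s ∈ Icc (0:ℝ) 1, u r ≠ u s) ∧
      (∀ r ∈ Ioo (0:ℝ) 1,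
        -u'' r - ((N : ℝ) - 1) / r * u' r + u r = f (u r))) := by
  obtain ⟨n, rfl⟩ : ∃ n, N = n + 1 := ⟨N - 1, by omega⟩
  have hn : n ≠ 0 := by omega
  obtain ⟨z₀, v₀, hz₀, hne₀⟩ := hlam2_eig.exists_isNeumannSol
  obtain ⟨z, χ, hz, hzm, hmean, hpos, hray⟩ := exists_monotone_testFunction hlam2_gt hz₀ hne₀
  have hfc := hf_diff.continuousOn
  have hf := isSubcritical_halfLineExtend hn hp2 hpcrit hfc hf_mono hf0 hC hf_growth hR0 hμ hAR
  have hc : halfLineExtend f hfc u0 = u0 := by rw [halfLineExtend_of_nonneg hfc hu0.le, hfu0]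
  have hd := hasDerivAt_halfLineExtend hf_diff hu0
  let ψ : C(Icc (0:ℝ) 1, ℝ) := ⟨fun x => z x, hz.continuousOn.domRestrict⟩
  have hψ : Monotone ψ := fun x y hxy => hzm x.2 y.2 hxy
  have hsol : ∀ w : C(Icc (0:ℝ) 1, ℝ), picard hn (halfLineExtend f hfc) w = w →
      IsNeumannSol n (fun r => halfLineExtend f hfc (ext01 w r)) (ext01 w)
        (picardDeriv hn (halfLineExtend f hfc) w) ∧ ∀ r ∈ Icc (0:ℝ) 1, 0 ≤ ext01 w r :=
    fun w hw => by
      have h1 := isNeumannSol_picard hn (halfLineExtend f hfc) w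
      have h2 := picard_nonneg_on hn hf w
      rw [hw] at h1 h2
      exact ⟨h1, h2⟩
  have hmax : ∀ w : C(Icc (0:ℝ) 1, ℝ), (∃ x, u0 ≤ w x) →
      ∃ r ∈ Icc (0:ℝ) 1, 0 < ext01 w r := by
    rintro w ⟨x, hx⟩
    exact ⟨x, x.2, by rw [ext01_coe]; exact hu0.trans_le hx⟩
  constructor
  · obtain ⟨w, hwK, hw, hwc, hne⟩ := exists_nonconstant_fixedPoint_of_testFunction hn hf hc hd
      hlam2_gt hf'u0 (ψ := ψ) (fun _ => rfl) hz hmean hpos hray isClosed_setOf_monotone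
      (fun u hu => monotone_picard hn hf.mono hu)
      fun s t ht x y hxy => add_le_add_right (mul_le_mul_of_nonneg_left (hψ hxy) ht.le) s
    have hmon := monotone_ext01_iff.2 hwK
    exact exists_solution_of_fixedPoint hn hfc hw
      ((hsol w hw).1.pos_of_monotoneOn (fun r _ => hf.nonneg _) (hsol w hw).2 hmon (hmax w hwc))
      hne (Q := fun u => MonotoneOn u (Icc 0 1)) hmon
  · have hz' : IsC1On (fun r => -z r) fun r => -χ r := by
      simpa using (IsC1On.const 0).sub hz
    have hmean' : radialInt n (fun r => -z r) = 0 := by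
      have := radialInt_const_mul (n := n) (-1) z
      simpa [hmean] using this
    obtain ⟨w, hwK, hw, hwc, hne⟩ := exists_nonconstant_fixedPoint_of_testFunction hn hf hc hd
      hlam2_gt hf'u0 (ψ := -ψ) (fun _ => rfl) hz' hmean' (by simpa using hpos)
      (by simpa using hray) isClosed_setOf_antitone
      (fun u hu => antitone_picard hn hf.mono hu)
      fun s t ht x y hxy => add_le_add_right
        (mul_le_mul_of_nonneg_left (neg_le_neg (hψ hxy)) ht.le) s
    have hmon := antitone_ext01_iff.2 hwK
    exact exists_solution_of_fixedPoint hn hfc hw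
      ((hsol w hw).1.pos_of_antitoneOn (fun r _ => hf.nonneg _) (hsol w hw).2 hmon (hmax w hwc))
      hne (Q := fun u => AntitoneOn u (Icc 0 1)) hmon
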